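/- Any sequence (a_k*) of minimisers of the k-th Dirichlet biharmonic eigenvalue over rectangles of unit area satisfies limsup_{k→∞} a_k* ≤ (6√3/(3√3 − 2√2))·(1 + Γ(3/4)/(√π·Γ(5/4))); in particular the sequence (a_k*) is bounded. -/

import Mathlib

open MeasureTheory Real Filter

noncomputable section

/-- Directional (partial) derivative of `u : ℝ × ℝ → ℝ` in direction `v`. -/
def pd (v : ℝ × ℝ) (u : ℝ × ℝ → ℝ) : ℝ × ℝ → ℝ := fun p => fderiv ℝ u p v

/-- Second partial derivative `∂²u/∂x²`. -/
def uxx (u : ℝ × ℝ → ℝ) : ℝ × ℝ → ℝ := pd (1, 0) (pd (1, 0) u)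

/-- Second partial derivative `∂²u/∂y²`. -/
def uyy (u : ℝ × ℝ → ℝ) : ℝ × ℝ → ℝ := pd (0, 1) (pd (0, 1) u)

/-- Mixed second partial derivative `∂²u/∂x∂y`. -/
def uxy (u : ℝ × ℝ → ℝ) : ℝ × ℝ → ℝ := pd (0, 1) (pd (1, 0) u)

/-- The Laplacian `Δu = u_xx + u_yy`. -/
def lap (u : ℝ × ℝ → ℝ) : ℝ × ℝ → ℝ := fun p => uxx u p + uyy u p

/-- The open rectangle `R_a = (0,a) × (0,1/a)` of unit area. -/
def Rect (a : ℝ) : Set (ℝ × ℝ) := Set.Ioo 0 a ×ˢ Set.Ioo 0 (1 / a)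

/-- Admissible test functions: smooth, compactly supported inside `Ω`. -/
def Adm (Ω : Set (ℝ × ℝ)) (u : ℝ × ℝ → ℝ) : Prop :=
  ContDiff ℝ (⊤ : ℕ∞) u ∧ HasCompactSupport u ∧ tsupport u ⊆ Ω

/-- First Dirichlet eigenvalue of the biharmonic operator on `R_a`,
characterized variationally as the infimum of the Rayleigh quotient. -/
def lam1 (a : ℝ) : ℝ :=
  sInf { μ | ∃ u : ℝ × ℝ → ℝ, Adm (Rect a) u ∧ u ≠ 0 ∧
    μ = (∫ p, (lap u p) ^ 2) / (∫ p, (u p) ^ 2) }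

/-- `k`-th Dirichlet eigenvalue of the biharmonic operator on `R_a`:
infimum over linearly independent `k`-tuples of admissible functions of the
maximum of the Rayleigh quotient over nonzero linear combinations. -/
def lamk (k : ℕ) (a : ℝ) : ℝ :=
  sInf { μ | ∃ u : Fin k → (ℝ × ℝ → ℝ), (∀ i, Adm (Rect a) (u i)) ∧
    LinearIndependent ℝ u ∧
    μ = sSup { r | ∃ c : Fin k → ℝ, c ≠ 0 ∧
      r = (∫ p, (lap (fun q => ∑ i, c i * u i q) p) ^ 2) /
          (∫ p, (∑ i, c i * u i p) ^ 2) } }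

/-!
Compare a long rectangle with the unit square.

*Long rectangles.* A compactly supported `u` satisfies Parseval's identity in the Dirichlet sine
basis of `R_a`, and `Δ` multiplies its coefficients by `-π² ((m/a)² + (na)²)`. So if `u` is
orthogonal to the modes with `(m/a)² + (na)² < R²`, its Rayleigh quotient is at least `(πR)⁴`, and
`λ_k(a) ≥ (πR)⁴` as soon as there are fewer than `k` such modes. For given `n` at most
`a √(R² - (na)²)` of them occur; the sum over `n` is a Riemann sum for `πR²/4` with step `a`, and
concavity of `√(R² - t²)` makes it fall short by nearly `aR/2`.

*The square.* The products of the profiles `sin (πx) sin ((m + 1)πx)` vanish to second order on the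
boundary, so they are admissible after a truncation, and each is a combination of four cosine
modes. The Parseval identity for Neumann modes bounds `λ_k(1)` by `(πr)⁴` once `k` of the products
involve only frequencies at most `r`, and at least `πr²/4 - 7r/2 - O(√r)` of them do.

If `a/2 > 7/2` the rectangle loses more than the square, so the eventual bound on minimisers is `7`.
-/

/-! ### Concave functions and the sum `∑_{1 ≤ n ≤ x} √(x² - n²)` -/

section HermiteHadamard

variable {f : ℝ → ℝ} {p q : ℝ}

lemma intervalIntegrable_reflect (hf : IntervalIntegrable f volume p q) :
    IntervalIntegrable (fun t => f (p + q - t)) volume p q := by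
  simpa using (hf.comp_sub_left (p + q)).symm

lemma intervalIntegrable_half_add_reflect (hf : IntervalIntegrable f volume p q) :
    IntervalIntegrable (fun t => (f t + f (p + q - t)) / 2) volume p q :=
  (hf.add (intervalIntegrable_reflect hf)).div_const 2

lemma integral_half_add_reflect (hf : IntervalIntegrable f volume p q) :
    ∫ t in p..q, (f t + f (p + q - t)) / 2 = ∫ t in p..q, f t := by
  rw [intervalIntegral.integral_div,
    intervalIntegral.integral_add hf (intervalIntegrable_reflect hf),
    intervalIntegral.integral_comp_sub_left]
  simp

lemma add_le_add_reflect_of_concaveOn (hc : ConcaveOn ℝ (Set.Icc p q) f) {t : ℝ}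
    (ht : t ∈ Set.Icc p q) : f p + f q ≤ f t + f (p + q - t) := by
  have hpq : p ≤ q := ht.1.trans ht.2
  obtain ⟨r, s, hr, hs, hrs, rfl⟩ : t ∈ segment ℝ p q := by rwa [segment_eq_Icc hpq]
  have hp := Set.left_mem_Icc.2 hpq
  have hq := Set.right_mem_Icc.2 hpq
  have htle := hc.2 hp hq hr hs hrs
  have hreflect := hc.2 hp hq hs hr (by rwa [add_comm])
  obtain rfl : s = 1 - r := by linarith
  simp only [smul_eq_mul] at htle hreflect ⊢
  rw [show p + q - (r * p + (1 - r) * q) = (1 - r) * p + r * q by ring]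
  linarith

lemma trapezoid_le_integral_of_concaveOn (hpq : p ≤ q) (hc : ConcaveOn ℝ (Set.Icc p q) f)
    (hf : IntervalIntegrable f volume p q) :
    (q - p) * ((f p + f q) / 2) ≤ ∫ t in p..q, f t := by
  rw [← integral_half_add_reflect hf, ← smul_eq_mul,
    ← intervalIntegral.integral_const]
  refine intervalIntegral.integral_mono_on hpq (by simp)
    (intervalIntegrable_half_add_reflect hf) fun t ht => ?_
  linarith [add_le_add_reflect_of_concaveOn hc ht]

lemma integral_le_midpoint_of_concaveOn (hpq : p ≤ q) (hc : ConcaveOn ℝ (Set.Icc p q) f)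
    (hf : IntervalIntegrable f volume p q) :
    ∫ t in p..q, f t ≤ (q - p) * f ((p + q) / 2) := by
  rw [← integral_half_add_reflect hf, ← smul_eq_mul,
    ← intervalIntegral.integral_const]
  refine intervalIntegral.integral_mono_on hpq (intervalIntegrable_half_add_reflect hf)
    (by simp) fun t ht => ?_
  have hmid := hc.2 ht (show p + q - t ∈ Set.Icc p q from ⟨by linarith [ht.2], by
    linarith [ht.1]⟩) (by norm_num : (0 : ℝ) ≤ 1 / 2) (by norm_num : (0 : ℝ) ≤ 1 / 2)
    (by norm_num)
  simp only [smul_eq_mul] at hmid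
  rw [show 1 / 2 * t + 1 / 2 * (p + q - t) = (p + q) / 2 by ring] at hmid
  linarith

end HermiteHadamard

section SumsOfConcaveFunctions

variable {f : ℝ → ℝ} {b : ℝ} (N : ℕ)

lemma integral_eq_sum_integral_unit (hf : IntervalIntegrable f volume b (b + N)) :
    ∫ t in b..(b + N), f t = ∑ n ∈ Finset.range N, ∫ t in (b + n)..(b + n + 1), f t := by
  have h := intervalIntegral.sum_integral_adjacent_intervals (f := f) (μ := volume) (n := N)
    (a := fun n : ℕ => b + n) fun n hn => hf.mono_set ?_
  · simpa [add_assoc] using h.symm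
  · have hn' : (n : ℝ) + 1 ≤ N := by exact_mod_cast hn
    rw [Set.uIcc_of_le (by simp), Set.uIcc_of_le (by simp)]
    push_cast
    exact Set.Icc_subset_Icc (by simp) (by linarith)

lemma Icc_unit_subset {n : ℕ} (hn : n ∈ Finset.range N) :
    Set.Icc (b + n) (b + n + 1) ⊆ Set.Icc b (b + N) := by
  have hn' : (n : ℝ) + 1 ≤ N := by exact_mod_cast Finset.mem_range.1 hn
  exact Set.Icc_subset_Icc (by simp) (by linarith)

lemma intervalIntegrable_unit (hf : IntervalIntegrable f volume b (b + N)) {n : ℕ}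
    (hn : n ∈ Finset.range N) : IntervalIntegrable f volume (b + n) (b + n + 1) := by
  refine hf.mono_set ?_
  rw [Set.uIcc_of_le (by simp), Set.uIcc_of_le (by simp)]
  exact Icc_unit_subset N hn

lemma sum_le_integral_of_concaveOn (hc : ConcaveOn ℝ (Set.Icc b (b + N)) f)
    (hf : IntervalIntegrable f volume b (b + N)) :
    ∑ n ∈ Finset.range N, f (b + n + 1) ≤
      (∫ t in b..(b + N), f t) - (f b - f (b + N)) / 2 := by
  have htrap : ∑ n ∈ Finset.range N, (f (b + n) + f (b + n + 1)) / 2 ≤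
      ∫ t in b..(b + N), f t := by
    rw [integral_eq_sum_integral_unit N hf]
    refine Finset.sum_le_sum fun n hn => ?_
    simpa using trapezoid_le_integral_of_concaveOn (by linarith)
      (hc.subset (Icc_unit_subset N hn) (convex_Icc _ _)) (intervalIntegrable_unit N hf hn)
  have htele := Finset.sum_range_sub (fun n : ℕ => f (b + n)) N
  have hsplit : ∑ n ∈ Finset.range N, f (b + n + 1) =
      ∑ n ∈ Finset.range N, (f (b + n) + f (b + n + 1)) / 2 +
        (∑ n ∈ Finset.range N, (f (b + (n + 1 : ℕ)) - f (b + n))) / 2 := by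
    rw [Finset.sum_div, ← Finset.sum_add_distrib]
    refine Finset.sum_congr rfl fun n _ => ?_
    push_cast
    rw [← add_assoc]
    ring
  rw [hsplit, htele, Nat.cast_zero, add_zero]
  linarith

lemma integral_le_sum_of_concaveOn (hc : ConcaveOn ℝ (Set.Icc b (b + N)) f)
    (hf : IntervalIntegrable f volume b (b + N)) :
    ∫ t in b..(b + N), f t ≤ ∑ n ∈ Finset.range N, f (b + n + 1 / 2) := by
  rw [integral_eq_sum_integral_unit N hf]
  refine Finset.sum_le_sum fun n hn => ?_
  have h := integral_le_midpoint_of_concaveOn (by linarith)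
    (hc.subset (Icc_unit_subset N hn) (convex_Icc _ _)) (intervalIntegrable_unit N hf hn)
  rwa [show (b + n + (b + n + 1)) / 2 = b + n + 1 / 2 by ring,
    show b + n + 1 - (b + n) = 1 by ring, one_mul] at h

end SumsOfConcaveFunctions

section QuarterCircle

variable {x : ℝ}

lemma concaveOn_sqrt_sq_sub_sq (x : ℝ) :
    ConcaveOn ℝ {t | t ^ 2 ≤ x ^ 2} fun t => √(x ^ 2 - t ^ 2) := by
  refine ⟨by simpa using (even_two.convexOn_pow (𝕜 := ℝ)).convex_le (x ^ 2), ?_⟩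
  intro p hp q hq r s hr hs hrs
  simp only [smul_eq_mul]
  refine Real.le_sqrt_of_sq_le ?_
  have hA := Real.sq_sqrt (sub_nonneg.2 hp)
  have hB := Real.sq_sqrt (sub_nonneg.2 hq)
  obtain rfl : s = 1 - r := by linarith
  have hpq := mul_nonneg (mul_nonneg hr hs) (sq_nonneg (p - q))
  have hAB := mul_nonneg (mul_nonneg hr hs) (sq_nonneg (√(x ^ 2 - p ^ 2) - √(x ^ 2 - q ^ 2)))
  linear_combination r * hA + (1 - r) * hB + hpq + hAB

lemma intervalIntegrable_sqrt_sq_sub_sq (x p q : ℝ) :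
    IntervalIntegrable (fun t => √(x ^ 2 - t ^ 2)) volume p q :=
  Continuous.intervalIntegrable (by fun_prop) p q

lemma integral_sqrt_sq_sub_sq (hx : 0 ≤ x) :
    ∫ t in (0 : ℝ)..x, √(x ^ 2 - t ^ 2) = π * x ^ 2 / 4 := by
  have hunit : ∫ t in (0 : ℝ)..1, √(1 - t ^ 2) = π / 4 := by
    have heven := intervalIntegral.integral_comp_neg (a := 0) (b := 1)
      (fun t : ℝ => √(1 - t ^ 2))
    have hsplit := intervalIntegral.integral_add_adjacent_intervals (a := -1) (b := 0) (c := 1)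
      (by simpa using intervalIntegrable_sqrt_sq_sub_sq 1 (-1) 0)
      (by simpa using intervalIntegrable_sqrt_sq_sub_sq 1 0 1)
    simp only [neg_sq, neg_zero] at heven
    rw [integral_sqrt_one_sub_sq] at hsplit
    linarith
  have hscale : ∀ t : ℝ, √(x ^ 2 - (x * t) ^ 2) = x * √(1 - t ^ 2) := fun t => by
    rw [show x ^ 2 - (x * t) ^ 2 = x ^ 2 * (1 - t ^ 2) by ring, Real.sqrt_mul (sq_nonneg x),
      Real.sqrt_sq hx]
  have hsubst := intervalIntegral.mul_integral_comp_mul_left (a := 0) (b := 1)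
    (f := fun t : ℝ => √(x ^ 2 - t ^ 2)) x
  simp only [hscale, intervalIntegral.integral_const_mul, hunit, mul_zero, mul_one] at hsubst
  rw [← hsubst]
  ring

/-- The sum `∑_{1 ≤ n ≤ x} √(x² - n²)`, which approximates the number of lattice points with
positive coordinates in the disc of radius `x`. -/
def circleSum (x : ℝ) : ℝ := ∑ n ∈ Finset.range ⌊x⌋₊, √(x ^ 2 - ((n : ℝ) + 1) ^ 2)

lemma circleSum_le (hx : 0 ≤ x) :
    circleSum x ≤ π * x ^ 2 / 4 - (x - √(x ^ 2 - (⌊x⌋₊ : ℝ) ^ 2)) / 2 := by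
  have hfl := Nat.floor_le hx
  have hconc : ConcaveOn ℝ (Set.Icc 0 (0 + (⌊x⌋₊ : ℝ))) fun t => √(x ^ 2 - t ^ 2) :=
    (concaveOn_sqrt_sq_sub_sq x).subset
      (fun t ht => pow_le_pow_left₀ ht.1 (by linarith [ht.2]) 2) (convex_Icc _ _)
  have hsum := sum_le_integral_of_concaveOn _ hconc (intervalIntegrable_sqrt_sq_sub_sq x _ _)
  have hmono : ∫ t in (0 : ℝ)..⌊x⌋₊, √(x ^ 2 - t ^ 2) ≤ π * x ^ 2 / 4 := by
    rw [← integral_sqrt_sq_sub_sq hx]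
    exact intervalIntegral.integral_mono_interval le_rfl (Nat.cast_nonneg _) hfl
      (Eventually.of_forall fun t => Real.sqrt_nonneg _) (intervalIntegrable_sqrt_sq_sub_sq x _ _)
  simp only [zero_add, ne_eq, OfNat.ofNat_ne_zero, not_false_eq_true, zero_pow, sub_zero,
    Real.sqrt_sq hx] at hsum
  rw [circleSum]
  linarith

lemma integral_sqrt_sq_sub_sq_le {p q C : ℝ} (hpq : p ≤ q) (hC : 0 ≤ C)
    (h : ∀ t ∈ Set.Icc p q, x ^ 2 - t ^ 2 ≤ C ^ 2) :
    ∫ t in p..q, √(x ^ 2 - t ^ 2) ≤ (q - p) * C := by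
  have hle := intervalIntegral.integral_mono_on hpq (intervalIntegrable_sqrt_sq_sub_sq x p q)
    (intervalIntegrable_const (c := C)) fun t ht => Real.sqrt_le_iff.2 ⟨hC, h t ht⟩
  simpa using hle

lemma le_circleSum (hx : 1 ≤ x) : π * x ^ 2 / 4 - x / 2 - 3 * √x ≤ circleSum x := by
  have hx₀ : 0 ≤ x := zero_le_one.trans hx
  obtain ⟨N, hN⟩ : ∃ N, ⌊x⌋₊ = N + 1 := Nat.exists_eq_add_one.2 (Nat.floor_pos.2 hx)
  have hfl := Nat.floor_le hx₀
  have hfl' := Nat.lt_floor_add_one x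
  rw [hN, Nat.cast_add_one] at hfl hfl'
  have hbulk : ∫ t in (1 / 2 : ℝ)..(1 / 2 + N), √(x ^ 2 - t ^ 2) ≤ circleSum x := by
    have hconc : ConcaveOn ℝ (Set.Icc (1 / 2) (1 / 2 + (N : ℝ))) fun t => √(x ^ 2 - t ^ 2) :=
      (concaveOn_sqrt_sq_sub_sq x).subset
        (fun t ht => pow_le_pow_left₀ (one_half_pos.le.trans ht.1) (ht.2.trans (by linarith)) 2)
        (convex_Icc _ _)
    have hsum := integral_le_sum_of_concaveOn _ hconc (intervalIntegrable_sqrt_sq_sub_sq x _ _)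
    -- The interval of length one about `⌊x⌋` may leave the disc, so the last term is dropped.
    rw [circleSum, hN, Finset.sum_range_succ]
    refine (hsum.trans_eq (Finset.sum_congr rfl fun n _ => ?_)).trans
      (le_add_of_nonneg_right (Real.sqrt_nonneg _))
    rw [show (1 / 2 + n + 1 / 2 : ℝ) = n + 1 by ring]
  have hleft : ∫ t in (0 : ℝ)..(1 / 2), √(x ^ 2 - t ^ 2) ≤ (1 / 2 - 0) * x :=
    integral_sqrt_sq_sub_sq_le (by norm_num) hx₀ fun t _ => by linarith [sq_nonneg t]
  have hright : ∫ t in (1 / 2 + N : ℝ)..x, √(x ^ 2 - t ^ 2) ≤ (x - (1 / 2 + N)) * (2 * √x) := by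
    refine integral_sqrt_sq_sub_sq_le (by linarith) (by positivity) fun t ht => ?_
    rw [mul_pow, Real.sq_sqrt hx₀]
    nlinarith [ht.1, ht.2, N.cast_nonneg (α := ℝ)]
  have htail : (x - (1 / 2 + N)) * (2 * √x) ≤ 3 / 2 * (2 * √x) :=
    mul_le_mul_of_nonneg_right (by linarith) (by positivity)
  have harea := integral_sqrt_sq_sub_sq hx₀
  have hinteg := intervalIntegrable_sqrt_sq_sub_sq x
  rw [← intervalIntegral.integral_add_adjacent_intervals (hinteg 0 (1 / 2)) (hinteg _ _),
    ← intervalIntegral.integral_add_adjacent_intervals (hinteg (1 / 2) (1 / 2 + N)) (hinteg _ _)]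
    at harea
  linarith

end QuarterCircle

/-! ### Counting lattice points -/

lemma exists_finset_under_graph (N : ℕ) (f : ℕ → ℕ) :
    ∃ E : Finset (ℕ × ℕ), E.card = ∑ n ∈ Finset.range N, f n ∧
      ∀ p, p ∈ E ↔ p.2 < N ∧ p.1 < f p.2 := by
  refine ⟨(Finset.range N).biUnion fun n => Finset.range (f n) ×ˢ {n}, ?_, fun p => ?_⟩
  · rw [Finset.card_biUnion fun m _ n _ hmn =>
      Finset.disjoint_product.2 (Or.inr (Finset.disjoint_singleton.2 hmn))]
    simp only [Finset.card_product, Finset.card_range, Finset.card_singleton, mul_one]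
  · simp only [Finset.mem_biUnion, Finset.mem_product, Finset.mem_range, Finset.mem_singleton]
    constructor
    · rintro ⟨n, hn, hp, rfl⟩
      exact ⟨hn, hp⟩
    · exact fun ⟨hn, hp⟩ => ⟨p.2, hn, hp, rfl⟩

lemma exists_lowFrequency_finset {a R : ℝ} (ha : 0 < a) (hR : 0 ≤ R) :
    ∃ E : Finset (ℕ × ℕ), (E.card : ℝ) ≤ a ^ 2 * circleSum (R / a) ∧
      ∀ p ∉ E, R ^ 2 ≤ (((p.1 : ℝ) + 1) / a) ^ 2 + (((p.2 : ℝ) + 1) * a) ^ 2 := by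
  obtain ⟨E, hcard, hmem⟩ := exists_finset_under_graph ⌊R / a⌋₊
    (fun n => ⌊a ^ 2 * √((R / a) ^ 2 - ((n : ℝ) + 1) ^ 2)⌋₊)
  refine ⟨E, ?_, fun p hp => ?_⟩
  · rw [hcard, circleSum, Finset.mul_sum]
    push_cast
    exact Finset.sum_le_sum fun n _ => Nat.floor_le (by positivity)
  · contrapose! hp with hlt
    have hrow : ((p.2 : ℝ) + 1) * a ≤ R :=
      le_of_sq_le_sq ((le_add_of_nonneg_left (sq_nonneg _)).trans hlt.le) hR
    have hcol : ((p.1 : ℝ) + 1) / a ^ 2 ≤ √((R / a) ^ 2 - ((p.2 : ℝ) + 1) ^ 2) := by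
      refine Real.le_sqrt_of_sq_le (le_sub_iff_add_le.2 ?_)
      calc (((p.1 : ℝ) + 1) / a ^ 2) ^ 2 + ((p.2 : ℝ) + 1) ^ 2
          = ((((p.1 : ℝ) + 1) / a) ^ 2 + (((p.2 : ℝ) + 1) * a) ^ 2) / a ^ 2 := by field_simp
        _ ≤ R ^ 2 / a ^ 2 := by gcongr
        _ = (R / a) ^ 2 := (div_pow _ _ _).symm
    rw [div_le_iff₀' (by positivity)] at hcol
    exact (hmem p).2 ⟨Nat.le_floor (by push_cast; rwa [le_div_iff₀ ha]),
      Nat.le_floor (by push_cast; exact hcol)⟩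

lemma exists_trial_finset {r : ℝ} (hr : 1 ≤ r) :
    ∃ I : Finset (ℕ × ℕ), circleSum r - 3 * r ≤ I.card ∧
      ∀ p ∈ I, ((p.1 : ℝ) + 2) ^ 2 + ((p.2 : ℝ) + 2) ^ 2 ≤ r ^ 2 := by
  obtain ⟨N, hN⟩ : ∃ N, ⌊r⌋₊ = N + 1 := Nat.exists_eq_add_one.2 (Nat.floor_pos.2 hr)
  have hfl := Nat.floor_le (zero_le_one.trans hr)
  rw [hN, Nat.cast_add_one] at hfl
  obtain ⟨I, hcard, hmem⟩ := exists_finset_under_graph N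
    (fun n => ⌊√(r ^ 2 - ((n : ℝ) + 2) ^ 2)⌋₊ - 1)
  refine ⟨I, ?_, fun p hp => ?_⟩
  · have hterm : ∀ n : ℕ, √(r ^ 2 - ((n : ℝ) + 2) ^ 2) - 2 ≤
        ((⌊√(r ^ 2 - ((n : ℝ) + 2) ^ 2)⌋₊ - 1 : ℕ) : ℝ) := fun n => by
      have hlt := Nat.lt_floor_add_one (√(r ^ 2 - ((n : ℝ) + 2) ^ 2))
      have hsub : (⌊√(r ^ 2 - ((n : ℝ) + 2) ^ 2)⌋₊ : ℝ) ≤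
          ((⌊√(r ^ 2 - ((n : ℝ) + 2) ^ 2)⌋₊ - 1 : ℕ) : ℝ) + 1 := by
        exact_mod_cast (by omega)
      linarith
    have hsum := Finset.sum_le_sum fun n (_ : n ∈ Finset.range N) => hterm n
    rw [Finset.sum_sub_distrib, Finset.sum_const, Finset.card_range, nsmul_eq_mul] at hsum
    have hfirst : √(r ^ 2 - 1) ≤ r := Real.sqrt_le_iff.2 ⟨by linarith, by linarith⟩
    rw [hcard, circleSum, hN, Finset.sum_range_succ']
    push_cast
    simp only [add_assoc, one_add_one_eq_two, zero_add, one_pow]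
    linarith
  · obtain ⟨-, hlt⟩ := (hmem p).1 hp
    have hle : ((p.1 + 2 : ℕ) : ℝ) ≤ √(r ^ 2 - ((p.2 : ℝ) + 2) ^ 2) :=
      (Nat.le_floor_iff (Real.sqrt_nonneg _)).1 (by omega)
    push_cast at hle
    linarith [(Real.le_sqrt' (by positivity)).1 hle]

/-! ### Admissible functions -/

lemma contDiff_pd {m n : WithTop ℕ∞} {u : ℝ × ℝ → ℝ} (h : ContDiff ℝ n u) (hmn : m + 1 ≤ n)
    (v : ℝ × ℝ) : ContDiff ℝ m (pd v u) :=
  (h.fderiv_right hmn).clm_apply contDiff_const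

lemma continuous_lap {u : ℝ × ℝ → ℝ} (h : ContDiff ℝ 2 u) : Continuous (lap u) := by
  have hpd : ∀ v, Continuous (pd v (pd v u)) := fun v =>
    (contDiff_pd (m := 0) (contDiff_pd (m := 1) h (by norm_num) v) (by norm_num) v).continuous
  exact (hpd _).add (hpd _)

section Sums

variable {ι : Type*} {u : ι → ℝ × ℝ → ℝ}

lemma pd_sum (hu : ∀ i, Differentiable ℝ (u i)) (v : ℝ × ℝ) (c : ι → ℝ) (s : Finset ι) :
    pd v (fun p => ∑ i ∈ s, c i * u i p) = fun p => ∑ i ∈ s, c i * pd v (u i) p := by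
  funext p
  simp only [pd, fderiv_fun_sum fun i _ => ((hu i) p).const_mul (c i),
    fderiv_const_mul ((hu _) p), _root_.sum_apply, smul_apply, smul_eq_mul]

lemma lap_sum (hu : ∀ i, ContDiff ℝ 2 (u i)) (c : ι → ℝ) (s : Finset ι) :
    lap (fun p => ∑ i ∈ s, c i * u i p) = fun p => ∑ i ∈ s, c i * lap (u i) p := by
  have hd : ∀ i, Differentiable ℝ (u i) := fun i => (hu i).differentiable two_ne_zero
  have hpd : ∀ v i, Differentiable ℝ (pd v (u i)) := fun v i =>
    (contDiff_pd (m := 1) (hu i) (by norm_num) v).differentiable one_ne_zero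
  funext p
  simp only [lap, uxx, uyy, pd_sum hd, pd_sum (hpd _), mul_add, Finset.sum_add_distrib]

lemma sum_mul_ne_zero [Fintype ι] (hu : LinearIndependent ℝ u) {c : ι → ℝ} (hc : c ≠ 0) :
    (fun p => ∑ i, c i * u i p) ≠ 0 := by
  refine fun h => hc (funext (Fintype.linearIndependent_iff.1 hu c ?_))
  rw [← h]
  funext p
  simp only [Finset.sum_apply, Pi.smul_apply, smul_eq_mul]

end Sums

lemma pd_tensor {f g : ℝ → ℝ} (hf : Differentiable ℝ f) (hg : Differentiable ℝ g) (v : ℝ × ℝ) :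
    pd v (fun p => f p.1 * g p.2) =
      fun p => v.1 * (deriv f p.1 * g p.2) + v.2 * (f p.1 * deriv g p.2) := by
  funext p
  have hfst := (hf p.1).hasDerivAt.comp_hasFDerivAt p (hasFDerivAt_fst (𝕜 := ℝ))
  have hsnd := (hg p.2).hasDerivAt.comp_hasFDerivAt p (hasFDerivAt_snd (𝕜 := ℝ))
  have hmul : HasFDerivAt (fun p : ℝ × ℝ => f p.1 * g p.2) _ p := hfst.mul hsnd
  simp only [pd, hmul.fderiv, Function.comp_apply, add_apply,
    smul_apply, ContinuousLinearMap.coe_fst',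
    ContinuousLinearMap.coe_snd', smul_eq_mul]
  ring

lemma lap_tensor {f g : ℝ → ℝ} (hf : ContDiff ℝ 2 f) (hg : ContDiff ℝ 2 g) :
    lap (fun p => f p.1 * g p.2) =
      fun p => deriv (deriv f) p.1 * g p.2 + f p.1 * deriv (deriv g) p.2 := by
  have hf₁ := hf.differentiable two_ne_zero
  have hg₁ := hg.differentiable two_ne_zero
  funext p
  simp only [lap, uxx, uyy, pd_tensor hf₁ hg₁, one_mul, zero_mul, add_zero, zero_add,
    pd_tensor hf.differentiable_deriv_two hg₁, pd_tensor hf₁ hg.differentiable_deriv_two]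

namespace Adm

variable {Ω : Set (ℝ × ℝ)} {u : ℝ × ℝ → ℝ}

lemma contDiff {n : ℕ∞} (h : Adm Ω u) : ContDiff ℝ n u :=
  h.1.of_le (by exact_mod_cast le_top)

lemma continuous (h : Adm Ω u) : Continuous u :=
  h.1.continuous

lemma eq_zero (h : Adm Ω u) {p : ℝ × ℝ} (hp : p ∉ Ω) : u p = 0 :=
  image_eq_zero_of_notMem_tsupport fun hp' => hp (h.2.2 hp')

protected lemma pd (h : Adm Ω u) (v : ℝ × ℝ) : Adm Ω (pd v u) :=
  ⟨contDiff_pd h.1 (by simp) v, h.2.1.fderiv_apply ℝ v,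
    (tsupport_fderiv_apply_subset ℝ v).trans h.2.2⟩

protected lemma add {w : ℝ × ℝ → ℝ} (hu : Adm Ω u) (hw : Adm Ω w) :
    Adm Ω (fun p => u p + w p) :=
  ⟨hu.1.add hw.1, hu.2.1.add hw.2.1, (tsupport_add u w).trans (Set.union_subset hu.2.2 hw.2.2)⟩

protected lemma lap (h : Adm Ω u) : Adm Ω (lap u) :=
  ((h.pd _).pd _).add ((h.pd _).pd _)

protected lemma const_mul (h : Adm Ω u) (c : ℝ) : Adm Ω (fun p => c * u p) :=
  ⟨contDiff_const.mul h.1, h.2.1.mul_left,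
    (tsupport_mul_subset_right (f := fun _ => c)).trans h.2.2⟩

protected lemma sum {ι : Type*} {u : ι → ℝ × ℝ → ℝ} (h : ∀ i, Adm Ω (u i)) (c : ι → ℝ)
    (s : Finset ι) : Adm Ω (fun p => ∑ i ∈ s, c i * u i p) := by
  classical
  induction s using Finset.induction_on with
  | empty =>
    exact ⟨by simpa using contDiff_const, HasCompactSupport.intro isCompact_empty (by simp),
      by simp [tsupport]⟩
  | insert i s hi ih =>
    simp_rw [Finset.sum_insert hi]
    exact ((h i).const_mul (c i)).add ih

lemma integrable_mul (h : Adm Ω u) {g : ℝ × ℝ → ℝ} (hg : Continuous g) :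
    Integrable (fun p => u p * g p) :=
  (h.continuous.mul hg).integrable_of_hasCompactSupport h.2.1.mul_right

lemma integrable_sq (h : Adm Ω u) : Integrable (fun p => u p ^ 2) := by
  simpa only [sq] using h.integrable_mul h.continuous

lemma integral_sq_pos (h : Adm Ω u) (hu : u ≠ 0) : 0 < ∫ p, u p ^ 2 := by
  obtain ⟨p, hp⟩ := Function.ne_iff.1 hu
  exact (h.continuous.pow 2).integral_pos_of_hasCompactSupport_nonneg_nonzero
    (by simpa only [sq] using h.2.1.mul_right) (fun p => sq_nonneg (u p)) (pow_ne_zero 2 hp)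

lemma integral_pd_mul (h : Adm Ω u) {g : ℝ × ℝ → ℝ} (hg : ContDiff ℝ 1 g) (v : ℝ × ℝ) :
    ∫ p, pd v u p * g p = -∫ p, u p * pd v g p := by
  have hparts := integral_mul_fderiv_eq_neg_fderiv_mul_of_integrable (μ := volume) (v := v)
    ((h.pd v).integrable_mul hg.continuous)
    (h.integrable_mul (contDiff_pd (m := 0) hg (by norm_num) v).continuous)
    (h.integrable_mul hg.continuous) (fun p _ => h.contDiff.differentiable one_ne_zero p)
    (fun p _ => hg.differentiable one_ne_zero p)
  simp only [pd]
  rw [hparts, neg_neg]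

lemma integral_lap_mul (h : Adm Ω u) {g : ℝ × ℝ → ℝ} (hg : ContDiff ℝ 2 g) :
    ∫ p, lap u p * g p = ∫ p, u p * lap g p := by
  have hg₀ := hg.continuous
  have hg₁ : ∀ v, ContDiff ℝ 1 (pd v g) := contDiff_pd hg (by norm_num)
  have hg₂ : ∀ v w, Continuous (pd v (pd w g)) := fun v w =>
    (contDiff_pd (m := 0) (hg₁ w) (by norm_num) v).continuous
  have htwice : ∀ v, ∫ p, pd v (pd v u) p * g p = ∫ p, u p * pd v (pd v g) p := fun v => by
    rw [(h.pd v).integral_pd_mul (hg.of_le one_le_two), h.integral_pd_mul (hg₁ v), neg_neg]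
  simp only [lap, uxx, uyy, add_mul, mul_add]
  rw [integral_add (((h.pd _).pd _).integrable_mul hg₀) (((h.pd _).pd _).integrable_mul hg₀),
    integral_add (h.integrable_mul (hg₂ _ _)) (h.integrable_mul (hg₂ _ _)), htwice, htwice]

end Adm

lemma exists_linearIndependent_adm {Ω : Set (ℝ × ℝ)} (hΩ : IsOpen Ω) (hne : Ω.Nonempty)
    (k : ℕ) : ∃ u : Fin k → ℝ × ℝ → ℝ, (∀ i, Adm Ω (u i)) ∧ LinearIndependent ℝ u := by
  have hinf : Ω.Infinite := infinite_of_mem_nhds _ (hΩ.mem_nhds hne.some_mem)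
  obtain ⟨p, hp⟩ : ∃ p : Fin k → Ω, Function.Injective p :=
    have := hinf.to_subtype
    ⟨_, ((Infinite.natEmbedding Ω).injective.comp Fin.val_injective)⟩
  have hbump : ∀ i, ∃ u : ℝ × ℝ → ℝ, Adm Ω u ∧ u (p i) = 1 ∧ ∀ j ≠ i, u (p j) = 0 := fun i => by
    have hfin : {q : ℝ × ℝ | ∃ j ≠ i, q = p j}.Finite :=
      (Set.finite_range fun j => (p j : ℝ × ℝ)).subset fun q ⟨j, _, hq⟩ => ⟨j, hq.symm⟩
    have hmem : (p i : ℝ × ℝ) ∈ Ω \ {q | ∃ j ≠ i, q = p j} :=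
      ⟨(p i).2, fun ⟨j, hj, hij⟩ => hj (hp (Subtype.ext hij)).symm⟩
    obtain ⟨u, hsub, hcpt, hsmooth, -, hone⟩ := exists_contDiff_tsupport_subset (n := (⊤ : ℕ∞))
      ((hΩ.sdiff hfin.isClosed).mem_nhds hmem)
    exact ⟨u, ⟨hsmooth, hcpt, hsub.trans Set.sdiff_subset⟩, hone, fun j hj =>
      image_eq_zero_of_notMem_tsupport fun hq => (hsub hq).2 ⟨j, hj, rfl⟩⟩
  choose u hu hone hzero using hbump
  refine ⟨u, hu, Fintype.linearIndependent_iff.2 fun c hc i => ?_⟩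
  have heval := congrFun hc (p i)
  rwa [Finset.sum_apply, Finset.sum_eq_single i (fun j _ hj => by simp [hzero j i hj.symm])
    (by simp), Pi.smul_apply, hone, smul_eq_mul, mul_one] at heval

/-! ### Parseval's identity for the sine basis of a rectangle -/

lemma integrable_of_eq_zero_off_Ioo {E : Type*} [NormedAddCommGroup E] {p q : ℝ} {g : ℝ → E}
    (hg : Continuous g) (h₀ : ∀ x ∉ Set.Ioo p q, g x = 0) : Integrable g :=
  (hg.integrableOn_Icc (a := p) (b := q)).integrable_of_forall_notMem_eq_zero
    fun x hx => h₀ x fun h => hx (Set.Ioo_subset_Icc_self h)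

/-- The Dirichlet eigenfunction `sin ((n + 1)πx / L)` of the interval `(0, L)`, indexed from
`0`. -/
def sineMode (L : ℝ) (n : ℕ) (x : ℝ) : ℝ := Real.sin (((n : ℝ) + 1) * π * x / L)

lemma contDiff_sineMode (L : ℝ) (n : ℕ) {m : WithTop ℕ∞} : ContDiff ℝ m (sineMode L n) := by
  unfold sineMode
  fun_prop

section Interval

variable {L : ℝ} {f : ℝ → ℝ}

lemma eq_zero_and_comp_neg_eq_zero (h₀ : ∀ x ∉ Set.Ioo 0 L, f x = 0) {x : ℝ}
    (hx : x ∉ Set.Ioc (-L) L) : f x = 0 ∧ f (-x) = 0 :=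
  ⟨h₀ x fun h => hx ⟨by linarith [h.1, h.2], h.2.le⟩,
    h₀ (-x) fun h => hx ⟨by linarith [h.2], by linarith [h.1, h.2]⟩⟩

lemma integral_mul_sub_comp_neg (hf : Continuous f) (h₀ : ∀ x ∉ Set.Ioo 0 L, f x = 0)
    {e : ℝ → ℂ} (he : Continuous e) :
    ∫ x in (-L)..L, e x * ((f x - f (-x) : ℝ) : ℂ) = ∫ x, (e x - e (-x)) * f x := by
  have hinteg : ∀ g : ℝ → ℂ, Continuous g → Integrable fun x => g x * f x := fun g hg =>
    integrable_of_eq_zero_off_Ioo (by fun_prop) fun x hx => by rw [h₀ x hx]; simp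
  have he' : Continuous fun x => e (-x) := he.comp continuous_neg
  have hreflect : ∫ x, e x * f (-x) = ∫ x, e (-x) * f x := by
    simpa using (integral_neg_eq_self (fun x : ℝ => e x * f (-x)) volume).symm
  have hinteg' : Integrable fun x => e x * f (-x) := by simpa using (hinteg _ he').comp_neg
  rw [intervalIntegral.integral_eq_integral_of_support_subset
    (Function.support_subset_iff'.2 fun x hx => by simp [eq_zero_and_comp_neg_eq_zero h₀ hx])]
  simp only [Complex.ofReal_sub, mul_sub, sub_mul]
  rw [integral_sub (hinteg e he) hinteg', hreflect, integral_sub (hinteg e he) (hinteg _ he')]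

lemma integral_sq_sub_comp_neg (hf : Continuous f) (h₀ : ∀ x ∉ Set.Ioo 0 L, f x = 0) :
    ∫ x in (-L)..L, (f x - f (-x)) ^ 2 = 2 * ∫ x, f x ^ 2 := by
  have hsq : ∀ x, (f x - f (-x)) ^ 2 = f x ^ 2 + f (-x) ^ 2 := fun x => by
    have hcross : f x * f (-x) = 0 := by
      by_cases hx : x ∈ Set.Ioo 0 L
      · rw [h₀ (-x) fun h => by linarith [h.1, hx.1], mul_zero]
      · rw [h₀ x hx, zero_mul]
    linear_combination -2 * hcross
  have hinteg : Integrable fun x => f x ^ 2 :=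
    integrable_of_eq_zero_off_Ioo (by fun_prop) fun x hx => by rw [h₀ x hx, zero_pow two_ne_zero]
  simp only [hsq]
  rw [intervalIntegral.integral_eq_integral_of_support_subset
    (Function.support_subset_iff'.2 fun x hx => by simp [eq_zero_and_comp_neg_eq_zero h₀ hx]),
    integral_add hinteg hinteg.comp_neg, integral_neg_eq_self (fun x => f x ^ 2) volume, two_mul]

lemma fourierCoeffOn_sub_comp_neg (hL : 0 < L) (hf : Continuous f)
    (h₀ : ∀ x ∉ Set.Ioo 0 L, f x = 0) (n : ℤ) :
    fourierCoeffOn (neg_lt_self hL) (fun x => ((f x - f (-x) : ℝ) : ℂ)) n =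
      -(Complex.I / L) * ((∫ x, f x * Real.sin (n * π * x / L) : ℝ) : ℂ) := by
  have hL' : (L : ℂ) ≠ 0 := by exact_mod_cast hL.ne'
  let e : ℝ → ℂ := fun x => Complex.exp (-(n * π * x / L * Complex.I))
  have hchar : ∀ x : ℝ, fourier (-n) (x : AddCircle (L - -L)) = e x := fun x => by
    rw [fourier_coe_apply]
    simp only [e]
    congr 1
    push_cast
    field_simp
    ring
  have hodd : ∀ x : ℝ, (e x - e (-x)) * f x =
      -2 * Complex.I * ((f x * Real.sin (n * π * x / L) : ℝ) : ℂ) := fun x => by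
    push_cast
    rw [Complex.sin]
    simp only [e]
    push_cast
    rw [show -(n * π * -(x : ℂ) / L * Complex.I) = n * π * x / L * Complex.I by ring,
      show -((n : ℂ) * π * x / L) * Complex.I = -(n * π * x / L * Complex.I) by ring]
    linear_combination (Complex.exp (-(n * π * x / L * Complex.I)) -
      Complex.exp (n * π * x / L * Complex.I)) * f x * Complex.I_sq
  rw [fourierCoeffOn_eq_integral]
  simp only [hchar, smul_eq_mul]
  rw [integral_mul_sub_comp_neg hf h₀ (by fun_prop)]
  simp only [hodd, integral_const_mul, integral_complex_ofReal, Complex.real_smul]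
  push_cast
  field_simp
  ring

/- Parseval for the Fourier series on `(-L, L)` of the odd extension of `f`, which is
`f x - f (-x)` because `f` vanishes off `(0, L)`. -/
lemma hasSum_sq_integral_sineMode (hL : 0 < L) (hf : Continuous f)
    (h₀ : ∀ x ∉ Set.Ioo 0 L, f x = 0) :
    HasSum (fun n : ℕ => 2 / L * (∫ x, f x * sineMode L n x) ^ 2) (∫ x, f x ^ 2) := by
  have hcont : Continuous fun x => ((f x - f (-x) : ℝ) : ℂ) := by fun_prop
  have hmem : MemLp (fun x => ((f x - f (-x) : ℝ) : ℂ)) 2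
      (volume.restrict (Set.Ioc (-L) L)) :=
    (hcont.memLp_of_hasCompactSupport (HasCompactSupport.intro
      (isCompact_Icc (a := -L) (b := L)) fun x hx => by
        simp [eq_zero_and_comp_neg_eq_zero h₀ fun h => hx (Set.Ioc_subset_Icc_self h)])).restrict _
  have hcoeff : ∀ n : ℤ,
      ‖fourierCoeffOn (neg_lt_self hL) (fun x => ((f x - f (-x) : ℝ) : ℂ)) n‖ ^ 2 =
        (∫ x, f x * Real.sin (n * π * x / L)) ^ 2 / L ^ 2 := fun n => by
    rw [fourierCoeffOn_sub_comp_neg hL hf h₀, norm_mul, norm_neg, norm_div, Complex.norm_I,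
      Complex.norm_real, Complex.norm_real, mul_pow, Real.norm_eq_abs, Real.norm_eq_abs, sq_abs,
      div_pow, sq_abs]
    ring
  have hneg : ∀ n : ℤ, (∫ x, f x * Real.sin ((-n : ℤ) * π * x / L)) ^ 2 =
      (∫ x, f x * Real.sin (n * π * x / L)) ^ 2 := fun n => by
    simp only [Int.cast_neg, neg_mul, neg_div, Real.sin_neg, mul_neg, integral_neg, neg_sq]
  have hsum := hasSum_sq_fourierCoeffOn (neg_lt_self hL) hmem
  simp only [hcoeff, Complex.norm_real, Real.norm_eq_abs, sq_abs,
    integral_sq_sub_comp_neg hf h₀] at hsum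
  have hshift := ((hasSum_nat_add_iff' 1).2 hsum.nat_add_neg).mul_left L
  simp only [hneg, Finset.sum_range_one, Nat.cast_zero, Int.cast_zero, zero_mul, zero_div,
    Real.sin_zero, mul_zero, integral_zero, smul_eq_mul] at hshift
  have hvalue : L * ((L - -L)⁻¹ * (2 * ∫ x, f x ^ 2) + 0 ^ 2 / L ^ 2 -
      (0 ^ 2 / L ^ 2 + 0 ^ 2 / L ^ 2)) = ∫ x, f x ^ 2 := by
    field_simp
    ring
  rw [hvalue] at hshift
  refine hshift.congr_fun fun n => ?_
  simp only [sineMode]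
  push_cast
  field_simp
  ring

lemma lintegral_sq_eq_tsum_sineMode (hL : 0 < L) (hf : Continuous f)
    (h₀ : ∀ x ∉ Set.Ioo 0 L, f x = 0) :
    ∫⁻ x, ENNReal.ofReal (f x ^ 2) =
      ∑' n : ℕ, ENNReal.ofReal (2 / L * (∫ x, f x * sineMode L n x) ^ 2) := by
  have hsum := hasSum_sq_integral_sineMode hL hf h₀
  have hinteg : Integrable fun x => f x ^ 2 :=
    integrable_of_eq_zero_off_Ioo (by fun_prop) fun x hx => by rw [h₀ x hx, zero_pow two_ne_zero]
  rw [← ofReal_integral_eq_lintegral_ofReal hinteg (ae_of_all _ fun x => sq_nonneg _),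
    ← hsum.tsum_eq, ENNReal.ofReal_tsum_of_nonneg (fun n => by positivity) hsum.summable]

end Interval

/-- The Dirichlet eigenfunctions of the Laplacian on `(0, a) × (0, b)`. -/
def dirichletMode (a b : ℝ) (m n : ℕ) (p : ℝ × ℝ) : ℝ := sineMode a m p.1 * sineMode b n p.2

lemma contDiff_dirichletMode (a b : ℝ) (m n : ℕ) {k : WithTop ℕ∞} :
    ContDiff ℝ k (dirichletMode a b m n) :=
  ((contDiff_sineMode a m).comp contDiff_fst).mul ((contDiff_sineMode b n).comp contDiff_snd)

lemma lintegral_sq_eq_tsum_dirichletMode {a b : ℝ} (ha : 0 < a) (hb : 0 < b)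
    {u : ℝ × ℝ → ℝ} (hu : Continuous u) (h₀ : ∀ p ∉ Set.Ioo 0 a ×ˢ Set.Ioo 0 b, u p = 0) :
    ∫⁻ p, ENNReal.ofReal (u p ^ 2) = ∑' m : ℕ, ∑' n : ℕ,
      ENNReal.ofReal (2 / a * (2 / b) * (∫ p, u p * dirichletMode a b m n p) ^ 2) := by
  have hfst : ∀ y, ∀ x ∉ Set.Ioo 0 a, u (x, y) = 0 := fun y x hx => h₀ _ fun h => hx h.1
  have hsnd : ∀ x, ∀ y ∉ Set.Ioo 0 b, u (x, y) = 0 := fun x y hy => h₀ _ fun h => hy h.2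
  let c : ℕ → ℝ → ℝ := fun m y => ∫ x, u (x, y) * sineMode a m x
  have hc : ∀ m, Continuous (c m) := fun m => by
    have hs := (contDiff_sineMode a m (m := 0)).continuous
    have hIoc : c m = fun y => ∫ x in (0 : ℝ)..a, u (x, y) * sineMode a m x := by
      funext y
      refine (intervalIntegral.integral_eq_integral_of_support_subset
        (Function.support_subset_iff'.2 fun x hx => ?_)).symm
      rw [hfst y x fun h => hx (Set.Ioo_subset_Ioc_self h), zero_mul]
    rw [hIoc]
    exact intervalIntegral.continuous_parametric_intervalIntegral_of_continuous' (by fun_prop) 0 a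
  have hc₀ : ∀ m, ∀ y ∉ Set.Ioo 0 b, c m y = 0 := fun m y hy => by
    simp only [c, hsnd _ y hy, zero_mul, integral_zero]
  have hmode : ∀ m n, ∫ p, u p * dirichletMode a b m n p = ∫ y, c m y * sineMode b n y :=
    fun m n => by
      have hcpt : HasCompactSupport u := HasCompactSupport.intro (isCompact_Icc.prod isCompact_Icc)
        fun p hp => h₀ p fun h =>
          hp (Set.prod_mono Set.Ioo_subset_Icc_self Set.Ioo_subset_Icc_self h)
      have hinteg : Integrable fun p => u p * dirichletMode a b m n p :=
        (hu.mul (contDiff_dirichletMode a b m n (k := 0)).continuous)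
          |>.integrable_of_hasCompactSupport hcpt.mul_right
      rw [Measure.volume_eq_prod, integral_prod_symm _ hinteg]
      simp only [c, ← integral_mul_const, dirichletMode, mul_assoc]
  have hrow : ∀ m, ∫⁻ y, ENNReal.ofReal (2 / a * c m y ^ 2) = ∑' n : ℕ,
      ENNReal.ofReal (2 / a * (2 / b) * (∫ y, c m y * sineMode b n y) ^ 2) := fun m => by
    simp only [mul_assoc, ENNReal.ofReal_mul (show 0 ≤ 2 / a by positivity)]
    rw [lintegral_const_mul _ (by have := hc m; fun_prop),
      lintegral_sq_eq_tsum_sineMode hb (hc m) (hc₀ m), ENNReal.tsum_mul_left]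
  simp only [hmode, ← hrow]
  rw [Measure.volume_eq_prod, lintegral_prod_symm _ (by fun_prop),
    ← lintegral_tsum fun m => by have := hc m; fun_prop]
  exact lintegral_congr fun y => lintegral_sq_eq_tsum_sineMode ha (by fun_prop) (hfst y)

lemma deriv_deriv_sin_mul (c : ℝ) :
    deriv (deriv fun x => Real.sin (c * x)) = fun x => -c ^ 2 * Real.sin (c * x) := by
  have hderiv : deriv (fun x => Real.sin (c * x)) = fun x => c * Real.cos (c * x) := by
    funext x
    rw [deriv_comp_mul_left, Real.deriv_sin, smul_eq_mul]
  funext x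
  rw [hderiv, deriv_const_mul_field, deriv_comp_mul_left, Real.deriv_cos, smul_eq_mul]
  ring

lemma lap_dirichletMode (a b : ℝ) (m n : ℕ) : lap (dirichletMode a b m n) = fun p =>
    -(π ^ 2 * ((((m : ℝ) + 1) / a) ^ 2 + (((n : ℝ) + 1) / b) ^ 2)) *
      dirichletMode a b m n p := by
  have hsine : ∀ (L : ℝ) (n : ℕ), sineMode L n = fun x => Real.sin (((n : ℝ) + 1) * π / L * x) :=
    fun L n => by
      funext x
      rw [sineMode, div_mul_eq_mul_div]
  have hderiv : ∀ (L : ℝ) (n : ℕ) (x : ℝ),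
      deriv (deriv (sineMode L n)) x = -(((n : ℝ) + 1) * π / L) ^ 2 * sineMode L n x :=
    fun L n x => by rw [hsine, deriv_deriv_sin_mul]
  have htensor := lap_tensor (contDiff_sineMode a m) (contDiff_sineMode b n)
  simp only [hderiv] at htensor
  refine htensor.trans (funext fun p => ?_)
  rw [dirichletMode]
  ring

lemma Adm.le_integral_lap_sq {a b R : ℝ} (ha : 0 < a) (hb : 0 < b) {E : Finset (ℕ × ℕ)}
    (hE : ∀ p ∉ E, R ^ 2 ≤ (((p.1 : ℝ) + 1) / a) ^ 2 + (((p.2 : ℝ) + 1) / b) ^ 2)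
    {u : ℝ × ℝ → ℝ} (h : Adm (Set.Ioo 0 a ×ˢ Set.Ioo 0 b) u)
    (horth : ∀ p ∈ E, ∫ q, u q * dirichletMode a b p.1 p.2 q = 0) :
    (π * R) ^ 4 * ∫ p, u p ^ 2 ≤ ∫ p, lap u p ^ 2 := by
  have hcoeff : ∀ m n, (π * R) ^ 4 * (∫ p, u p * dirichletMode a b m n p) ^ 2 ≤
      (∫ p, lap u p * dirichletMode a b m n p) ^ 2 := fun m n => by
    by_cases hmn : (m, n) ∈ E
    · simpa [horth _ hmn] using sq_nonneg (∫ p, lap u p * dirichletMode a b m n p)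
    · rw [h.integral_lap_mul (contDiff_dirichletMode a b m n), lap_dirichletMode]
      simp only [mul_left_comm (u _), integral_const_mul]
      rw [mul_pow (-_), neg_sq, show (π * R) ^ 4 = (π ^ 2 * R ^ 2) ^ 2 by ring]
      exact mul_le_mul_of_nonneg_right (pow_le_pow_left₀ (by positivity)
        (mul_le_mul_of_nonneg_left (hE _ hmn) (by positivity)) 2) (sq_nonneg _)
  have hlintegral : ENNReal.ofReal ((π * R) ^ 4) * ∫⁻ p, ENNReal.ofReal (u p ^ 2) ≤
      ∫⁻ p, ENNReal.ofReal (lap u p ^ 2) := by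
    rw [lintegral_sq_eq_tsum_dirichletMode ha hb h.continuous fun _ => h.eq_zero,
      lintegral_sq_eq_tsum_dirichletMode ha hb h.lap.continuous fun _ => h.lap.eq_zero,
      ← ENNReal.tsum_mul_left]
    refine ENNReal.tsum_le_tsum fun m => ?_
    rw [← ENNReal.tsum_mul_left]
    refine ENNReal.tsum_le_tsum fun n => ?_
    rw [← ENNReal.ofReal_mul (by positivity), mul_left_comm]
    gcongr
    exact hcoeff m n
  rwa [← ofReal_integral_eq_lintegral_ofReal h.integrable_sq (ae_of_all _ fun p => sq_nonneg _),
    ← ofReal_integral_eq_lintegral_ofReal h.lap.integrable_sq (ae_of_all _ fun p => sq_nonneg _),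
    ← ENNReal.ofReal_mul (by positivity),
    ENNReal.ofReal_le_ofReal_iff (integral_nonneg fun p => sq_nonneg _)] at hlintegral

/-! ### Rayleigh quotients and Gram matrices -/

open scoped Matrix

/-- The matrix of `L²(μ)` inner products of a family of real functions; the integrals defining
`lamk` are its quadratic forms. -/
def gramMatrix {α ι : Type*} [MeasurableSpace α] (μ : Measure α) (f : ι → α → ℝ) : Matrix ι ι ℝ :=
  Matrix.of fun i j => ∫ x, f i x * f j x ∂μ

/-- The Rayleigh quotients of the nonzero linear combinations of a tuple: `lamk` is the infimum
of the suprema of these sets. -/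
def rayleighSet {k : ℕ} (u : Fin k → ℝ × ℝ → ℝ) : Set ℝ :=
  { r | ∃ c : Fin k → ℝ, c ≠ 0 ∧ r = (∫ p, (lap (fun q => ∑ i, c i * u i q) p) ^ 2) /
    (∫ p, (∑ i, c i * u i p) ^ 2) }

lemma integral_sq_sum {α ι : Type*} [MeasurableSpace α] {μ : Measure α} {f : ι → α → ℝ}
    (hf : ∀ i j, Integrable (fun x => f i x * f j x) μ) (c : ι → ℝ) (s : Finset ι) :
    ∫ x, (∑ i ∈ s, c i * f i x) ^ 2 ∂μ =
      ∑ i ∈ s, ∑ j ∈ s, c i * c j * ∫ x, f i x * f j x ∂μ := by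
  have hinteg : ∀ i j, Integrable (fun x => c i * c j * (f i x * f j x)) μ := fun i j =>
    (hf i j).const_mul _
  simp only [sq, Finset.sum_mul_sum, mul_mul_mul_comm (c _) (f _ _)]
  rw [integral_finsetSum _ fun i _ => integrable_finsetSum _ fun j _ => hinteg i j]
  simp only [integral_finsetSum _ fun j _ => hinteg _ j, integral_const_mul]

section Forms

variable {ι : Type*} [Fintype ι]

lemma dotProduct_gramMatrix_mulVec {α : Type*} [MeasurableSpace α] {μ : Measure α}
    {f : ι → α → ℝ} (hf : ∀ i j, Integrable (fun x => f i x * f j x) μ) (c : ι → ℝ) :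
    c ⬝ᵥ gramMatrix μ f *ᵥ c = ∫ x, (∑ i, c i * f i x) ^ 2 ∂μ := by
  rw [integral_sq_sum hf]
  simp only [dotProduct, Matrix.mulVec, gramMatrix, Matrix.of_apply, Finset.mul_sum]
  exact Finset.sum_congr rfl fun i _ => Finset.sum_congr rfl fun j _ => by ring

lemma dotProduct_smul_sub_mulVec (t : ℝ) (A B : Matrix ι ι ℝ) (c : ι → ℝ) :
    c ⬝ᵥ (t • B - A) *ᵥ c = t * (c ⬝ᵥ B *ᵥ c) - c ⬝ᵥ A *ᵥ c := by
  rw [Matrix.sub_mulVec, Matrix.smul_mulVec, dotProduct_sub, dotProduct_smul, smul_eq_mul]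

lemma eventually_dotProduct_mulVec_pos {G₀ : Matrix ι ι ℝ} (h₀ : ∀ c ≠ 0, 0 < c ⬝ᵥ G₀ *ᵥ c) :
    ∀ᶠ G in nhds G₀, ∀ c ≠ 0, 0 < c ⬝ᵥ G *ᵥ c := by
  have hcont : Continuous fun z : Matrix ι ι ℝ × (ι → ℝ) => z.2 ⬝ᵥ z.1 *ᵥ z.2 := by fun_prop
  have hsphere := (isCompact_sphere (0 : ι → ℝ) 1).eventually_forall_of_forall_eventually
    (P := fun (G : Matrix ι ι ℝ) c => 0 < c ⬝ᵥ G *ᵥ c) fun c hc =>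
      hcont.continuousAt.eventually_const_lt (h₀ c (ne_zero_of_mem_unit_sphere ⟨c, hc⟩))
  filter_upwards [hsphere] with G hG c hc
  have hnorm : 0 < ‖c‖ := norm_pos_iff.2 hc
  have hunit := hG (‖c‖⁻¹ • c) (by simp [norm_smul, hnorm.ne'])
  rw [Matrix.mulVec_smul, dotProduct_smul, smul_dotProduct, smul_smul, smul_eq_mul] at hunit
  exact pos_of_mul_pos_right hunit (by positivity)

end Forms

namespace Adm

variable {Ω : Set (ℝ × ℝ)} {k : ℕ} {u : Fin k → ℝ × ℝ → ℝ}

lemma dotProduct_gramMatrix (h : ∀ i, Adm Ω (u i)) (c : Fin k → ℝ) :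
    c ⬝ᵥ gramMatrix volume u *ᵥ c = ∫ p, (∑ i, c i * u i p) ^ 2 :=
  dotProduct_gramMatrix_mulVec (fun i j => (h i).integrable_mul (h j).continuous) c

lemma dotProduct_gramMatrix_lap (h : ∀ i, Adm Ω (u i)) (c : Fin k → ℝ) :
    c ⬝ᵥ gramMatrix volume (fun i => lap (u i)) *ᵥ c =
      ∫ p, (lap (fun q => ∑ i, c i * u i q) p) ^ 2 := by
  rw [Adm.dotProduct_gramMatrix fun i => (h i).lap, lap_sum fun i => (h i).contDiff]

lemma dotProduct_gramMatrix_pos (h : ∀ i, Adm Ω (u i)) (hu : LinearIndependent ℝ u)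
    {c : Fin k → ℝ} (hc : c ≠ 0) : 0 < c ⬝ᵥ gramMatrix volume u *ᵥ c := by
  rw [Adm.dotProduct_gramMatrix h]
  exact (Adm.sum h c _).integral_sq_pos (sum_mul_ne_zero hu hc)

lemma linearIndependent_of_gramMatrix_pos (h : ∀ i, Adm Ω (u i))
    (hpos : ∀ c ≠ 0, 0 < c ⬝ᵥ gramMatrix volume u *ᵥ c) : LinearIndependent ℝ u := by
  refine Fintype.linearIndependent_iff.2 fun c hc => ?_
  have hzero : ∀ p, ∑ i, c i * u i p = 0 := fun p => by
    simpa only [Finset.sum_apply, Pi.smul_apply, smul_eq_mul, Pi.zero_apply] using congrFun hc p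
  suffices c = 0 from congrFun this
  by_contra hne
  have := hpos c hne
  simp [Adm.dotProduct_gramMatrix h, hzero] at this

lemma le_of_mem_rayleighSet (h : ∀ i, Adm Ω (u i)) (hu : LinearIndependent ℝ u) {M : ℝ}
    (hM : ∀ c ≠ 0, 0 < c ⬝ᵥ (M • gramMatrix volume u - gramMatrix volume fun i => lap (u i)) *ᵥ c) :
    ∀ r ∈ rayleighSet u, r ≤ M := by
  rintro _ ⟨c, hc, rfl⟩
  have hpos := Adm.dotProduct_gramMatrix_pos h hu hc
  have hMc := hM c hc
  rw [dotProduct_smul_sub_mulVec, sub_pos] at hMc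
  rw [← Adm.dotProduct_gramMatrix_lap h, ← Adm.dotProduct_gramMatrix h, div_le_iff₀ hpos]
  exact hMc.le

lemma bddAbove_rayleighSet (h : ∀ i, Adm Ω (u i)) (hu : LinearIndependent ℝ u) :
    BddAbove (rayleighSet u) := by
  set A := gramMatrix volume fun i => lap (u i)
  set B := gramMatrix volume u
  have hlim : Tendsto (fun t : ℝ => B - t • A) (nhdsWithin 0 (Set.Ioi 0)) (nhds B) := by
    have hcont : Continuous fun t : ℝ => B - t • A := by fun_prop
    simpa using (hcont.tendsto 0).mono_left nhdsWithin_le_nhds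
  have hpos := eventually_dotProduct_mulVec_pos fun c => Adm.dotProduct_gramMatrix_pos h hu
  obtain ⟨t, ht, ht₀⟩ := ((hlim.eventually hpos).and self_mem_nhdsWithin).exists
  refine ⟨t⁻¹, Adm.le_of_mem_rayleighSet h hu fun c hc => ?_⟩
  have hscale : t⁻¹ • B - A = t⁻¹ • (B - t • A) := by
    rw [smul_sub, inv_smul_smul₀ (ne_of_gt ht₀)]
  rw [hscale, Matrix.smul_mulVec, dotProduct_smul, smul_eq_mul]
  exact mul_pos (inv_pos.2 ht₀) (ht c hc)

end Adm

lemma lamk_le {k : ℕ} {a M : ℝ} (hM : 0 ≤ M) {u : Fin k → ℝ × ℝ → ℝ}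
    (h : ∀ i, Adm (Rect a) (u i)) (hu : LinearIndependent ℝ u) (hle : ∀ r ∈ rayleighSet u, r ≤ M) :
    lamk k a ≤ M := by
  have hbdd : BddBelow {μ | ∃ u : Fin k → ℝ × ℝ → ℝ, (∀ i, Adm (Rect a) (u i)) ∧
      LinearIndependent ℝ u ∧ μ = sSup (rayleighSet u)} := by
    refine ⟨0, ?_⟩
    rintro _ ⟨u, -, -, rfl⟩
    exact Real.sSup_nonneg fun r ⟨c, _, hr⟩ => hr ▸
      div_nonneg (integral_nonneg fun p => sq_nonneg _) (integral_nonneg fun p => sq_nonneg _)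
  exact (csInf_le hbdd ⟨u, h, hu, rfl⟩).trans (Real.sSup_le hle hM)

/- For `M < M'` the forms `B` and `M' • B - A` are positive definite, an open condition that the
approximating Gram matrices eventually inherit. -/
lemma lamk_le_of_tendsto_gramMatrix {k : ℕ} {a M : ℝ} (hM : 0 ≤ M)
    {w : ℕ → Fin k → ℝ × ℝ → ℝ} (hw : ∀ n i, Adm (Rect a) (w n i)) {A B : Matrix (Fin k) (Fin k) ℝ}
    (hA : Tendsto (fun n => gramMatrix volume fun i => lap (w n i)) atTop (nhds A))
    (hB : Tendsto (fun n => gramMatrix volume (w n)) atTop (nhds B))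
    (hpos : ∀ c ≠ 0, 0 < c ⬝ᵥ B *ᵥ c) (hle : ∀ c, c ⬝ᵥ A *ᵥ c ≤ M * (c ⬝ᵥ B *ᵥ c)) :
    lamk k a ≤ M := by
  refine le_of_forall_gt_imp_ge_of_dense fun M' hM' => ?_
  have hpos' : ∀ c ≠ 0, 0 < c ⬝ᵥ (M' • B - A) *ᵥ c := fun c hc => by
    rw [dotProduct_smul_sub_mulVec, sub_pos]
    exact (hle c).trans_lt (mul_lt_mul_of_pos_right hM' (hpos c hc))
  obtain ⟨n, hn, hn'⟩ := ((hB.eventually (eventually_dotProduct_mulVec_pos hpos)).and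
    (((hB.const_smul M').sub hA).eventually (eventually_dotProduct_mulVec_pos hpos'))).exists
  have hu := Adm.linearIndependent_of_gramMatrix_pos (hw n) hn
  exact lamk_le (hM.trans hM'.le) (hw n) hu (Adm.le_of_mem_rayleighSet (hw n) hu hn')

lemma exists_ne_zero_forall_sum_eq_zero {k : ℕ} {ι : Type*} {E : Finset ι} (hE : E.card < k)
    (φ : Fin k → ι → ℝ) : ∃ c : Fin k → ℝ, c ≠ 0 ∧ ∀ p ∈ E, ∑ i, c i * φ i p = 0 := by
  let T : (Fin k → ℝ) →ₗ[ℝ] E → ℝ := Matrix.mulVecLin (Matrix.of fun p i => φ i p)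
  obtain ⟨c, hcT, hc⟩ := (Submodule.ne_bot_iff _).1
    (LinearMap.ker_ne_bot_of_finrank_lt (f := T) (by simpa using hE))
  exact ⟨c, hc, fun p hp => (Finset.sum_congr rfl fun i _ => mul_comm _ _).trans
    (congrFun (LinearMap.mem_ker.1 hcT) ⟨p, hp⟩)⟩

lemma le_lamk {a R : ℝ} (ha : 0 < a) (E : Finset (ℕ × ℕ))
    (hE : ∀ p ∉ E, R ^ 2 ≤ (((p.1 : ℝ) + 1) / a) ^ 2 + (((p.2 : ℝ) + 1) * a) ^ 2) {k : ℕ}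
    (hk : E.card < k) : (π * R) ^ 4 ≤ lamk k a := by
  have hb : 0 < 1 / a := one_div_pos.2 ha
  obtain ⟨u₀, h₀, hu₀⟩ := exists_linearIndependent_adm (Ω := Rect a)
    (isOpen_Ioo.prod isOpen_Ioo) ((Set.nonempty_Ioo.2 ha).prod (Set.nonempty_Ioo.2 hb)) k
  refine le_csInf ⟨sSup (rayleighSet u₀), u₀, h₀, hu₀, rfl⟩ ?_
  rintro _ ⟨u, h, hu, rfl⟩
  obtain ⟨c, hc, horth⟩ := exists_ne_zero_forall_sum_eq_zero hk fun i p =>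
    ∫ q, u i q * dirichletMode a (1 / a) p.1 p.2 q
  have hadm : Adm (Rect a) fun p => ∑ i, c i * u i p := Adm.sum h c Finset.univ
  refine le_trans ?_ (le_csSup (Adm.bddAbove_rayleighSet h hu) ⟨c, hc, rfl⟩)
  rw [le_div_iff₀ (hadm.integral_sq_pos (sum_mul_ne_zero hu hc))]
  refine hadm.le_integral_lap_sq ha hb (by simpa only [div_div_eq_mul_div, div_one] using hE)
    fun p hp => ?_
  have hmode := (contDiff_dirichletMode a (1 / a) p.1 p.2 (k := 0)).continuous
  simp only [Finset.sum_mul, mul_assoc]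
  rw [integral_finsetSum _ fun i _ => ((h i).integrable_mul hmode).const_mul _]
  simpa only [integral_const_mul] using horth p hp

/-! ### Trial functions on the unit square -/

lemma integral_cos_int_mul_pi_mul (k : ℤ) :
    ∫ x in Set.Ioo (0 : ℝ) 1, Real.cos (k * π * x) = if k = 0 then 1 else 0 := by
  rw [← integral_Ioc_eq_integral_Ioo, ← intervalIntegral.integral_of_le zero_le_one]
  split_ifs with hk
  · simp [hk]
  · rw [intervalIntegral.integral_comp_mul_left (fun x => Real.cos x)
      (mul_ne_zero (Int.cast_ne_zero.2 hk) Real.pi_ne_zero), integral_cos]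
    simp [Real.sin_int_mul_pi]

/-- The Neumann eigenfunction `cos (nπx)` of the unit interval. -/
def cosMode (n : ℕ) (x : ℝ) : ℝ := Real.cos (n * π * x)

lemma contDiff_cosMode (n : ℕ) {m : WithTop ℕ∞} : ContDiff ℝ m (cosMode n) := by
  unfold cosMode
  fun_prop

lemma deriv_cosMode (n : ℕ) : deriv (cosMode n) = fun x => -(n * π * Real.sin (n * π * x)) := by
  funext x
  unfold cosMode
  rw [deriv_comp_mul_left, Real.deriv_cos, smul_eq_mul, mul_neg]

lemma deriv_deriv_cosMode (n : ℕ) :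
    deriv (deriv (cosMode n)) = fun x => -(n * π) ^ 2 * cosMode n x := by
  rw [deriv_cosMode]
  funext x
  rw [deriv.fun_neg, deriv_const_mul_field, deriv_comp_mul_left, Real.deriv_sin, smul_eq_mul,
    cosMode]
  ring

lemma integral_cosMode_mul (i j : ℕ) :
    ∫ x in Set.Ioo (0 : ℝ) 1, cosMode i x * cosMode j x =
      ((if (i : ℤ) - j = 0 then 1 else 0) + if (i : ℤ) + j = 0 then 1 else 0) / 2 := by
  have hprod : ∀ x, cosMode i x * cosMode j x =
      (Real.cos (((i - j : ℤ) : ℝ) * π * x) + Real.cos (((i + j : ℤ) : ℝ) * π * x)) / 2 :=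
    fun x => by
      push_cast
      rw [sub_mul, sub_mul, add_mul, add_mul, Real.cos_sub, Real.cos_add, cosMode, cosMode]
      ring
  have hinteg : ∀ k : ℤ, IntegrableOn (fun x => Real.cos (k * π * x)) (Set.Ioo (0 : ℝ) 1) :=
    fun k => (Continuous.integrableOn_Icc (by fun_prop)).mono_set Set.Ioo_subset_Icc_self
  simp only [hprod]
  rw [integral_div, integral_add (hinteg _) (hinteg _), integral_cos_int_mul_pi_mul,
    integral_cos_int_mul_pi_mul]

/-- The Neumann eigenfunctions of the unit square. -/
def neumannMode (s : ℕ × ℕ) (p : ℝ × ℝ) : ℝ := cosMode s.1 p.1 * cosMode s.2 p.2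

lemma contDiff_neumannMode (s : ℕ × ℕ) {m : WithTop ℕ∞} : ContDiff ℝ m (neumannMode s) :=
  ((contDiff_cosMode s.1).comp contDiff_fst).mul ((contDiff_cosMode s.2).comp contDiff_snd)

lemma lap_neumannMode (s : ℕ × ℕ) :
    lap (neumannMode s) =
      fun p => -(π ^ 2 * ((s.1 : ℝ) ^ 2 + (s.2 : ℝ) ^ 2)) * neumannMode s p := by
  have htensor := lap_tensor (contDiff_cosMode s.1) (contDiff_cosMode s.2)
  simp only [deriv_deriv_cosMode] at htensor
  refine htensor.trans (funext fun p => ?_)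
  rw [neumannMode]
  ring

lemma Rect_one : Rect 1 = Set.Ioo (0 : ℝ) 1 ×ˢ Set.Ioo (0 : ℝ) 1 := by
  rw [Rect, one_div_one]

lemma integrableOn_Rect_one {f : ℝ × ℝ → ℝ} (hf : Continuous f) : IntegrableOn f (Rect 1) := by
  rw [Rect_one]
  exact (hf.continuousOn.integrableOn_compact (isCompact_Icc.prod isCompact_Icc)).mono_set
    (Set.prod_mono Set.Ioo_subset_Icc_self Set.Ioo_subset_Icc_self)

lemma integral_neumannMode_mul (s t : ℕ × ℕ) :
    ∫ p in Rect 1, neumannMode s p * neumannMode t p =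
      (∫ x in Set.Ioo (0 : ℝ) 1, cosMode s.1 x * cosMode t.1 x) *
        ∫ y in Set.Ioo (0 : ℝ) 1, cosMode s.2 y * cosMode t.2 y := by
  rw [Rect_one, Measure.volume_eq_prod, ← setIntegral_prod_mul]
  simp only [neumannMode, mul_mul_mul_comm]

lemma integral_neumannMode_mul_of_ne {s t : ℕ × ℕ} (h : s ≠ t) :
    ∫ p in Rect 1, neumannMode s p * neumannMode t p = 0 := by
  have hcos : ∀ {i j : ℕ}, i ≠ j → ∫ x in Set.Ioo (0 : ℝ) 1, cosMode i x * cosMode j x = 0 :=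
    fun {i j} hij => by
      rw [integral_cosMode_mul, if_neg (by omega), if_neg (by omega), add_zero, zero_div]
  rw [integral_neumannMode_mul]
  rcases not_and_or.1 (mt Prod.ext_iff.2 h) with h₁ | h₂
  · rw [hcos h₁, zero_mul]
  · rw [hcos h₂, mul_zero]

lemma integral_neumannMode_mul_self_pos (s : ℕ × ℕ) :
    0 < ∫ p in Rect 1, neumannMode s p * neumannMode s p := by
  have hcos : ∀ i : ℕ, 0 < ∫ x in Set.Ioo (0 : ℝ) 1, cosMode i x * cosMode i x := fun i => by
    rw [integral_cosMode_mul, if_pos (sub_self _)]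
    split_ifs <;> norm_num
  rw [integral_neumannMode_mul]
  exact mul_pos (hcos _) (hcos _)

lemma integral_sq_sum_neumannMode (d : ℕ × ℕ → ℝ) (S : Finset (ℕ × ℕ)) :
    ∫ p in Rect 1, (∑ s ∈ S, d s * neumannMode s p) ^ 2 =
      ∑ s ∈ S, d s ^ 2 * ∫ p in Rect 1, neumannMode s p * neumannMode s p := by
  have hcont : ∀ s, Continuous (neumannMode s) := fun s =>
    (contDiff_neumannMode s (m := 0)).continuous
  rw [integral_sq_sum fun s t => integrableOn_Rect_one ((hcont s).mul (hcont t))]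
  refine Finset.sum_congr rfl fun s hs => ?_
  rw [Finset.sum_eq_single_of_mem s hs fun t _ hts => by
    rw [integral_neumannMode_mul_of_ne hts.symm, mul_zero], sq]

lemma integral_sq_sum_neumannMode_pos {d : ℕ × ℕ →₀ ℝ} (hd : d ≠ 0) :
    0 < ∫ p in Rect 1, (∑ s ∈ d.support, d s * neumannMode s p) ^ 2 := by
  rw [integral_sq_sum_neumannMode]
  refine Finset.sum_pos (fun s hs => ?_) (Finsupp.support_nonempty_iff.2 hd)
  exact mul_pos (sq_pos_of_ne_zero (Finsupp.mem_support_iff.1 hs))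
    (integral_neumannMode_mul_self_pos s)

lemma integral_lap_sq_sum_neumannMode_le {d : ℕ × ℕ → ℝ} {S : Finset (ℕ × ℕ)} {r : ℝ}
    (hS : ∀ s ∈ S, (s.1 : ℝ) ^ 2 + (s.2 : ℝ) ^ 2 ≤ r ^ 2) :
    ∫ p in Rect 1, lap (fun q => ∑ s ∈ S, d s * neumannMode s q) p ^ 2 ≤
      (π * r) ^ 4 * ∫ p in Rect 1, (∑ s ∈ S, d s * neumannMode s p) ^ 2 := by
  rw [lap_sum fun s => contDiff_neumannMode s]
  simp only [lap_neumannMode, ← mul_assoc]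
  rw [integral_sq_sum_neumannMode, integral_sq_sum_neumannMode, Finset.mul_sum]
  refine Finset.sum_le_sum fun s hs => ?_
  have hfreq : ((s.1 : ℝ) ^ 2 + (s.2 : ℝ) ^ 2) ^ 2 ≤ (r ^ 2) ^ 2 :=
    pow_le_pow_left₀ (by positivity) (hS s hs) 2
  rw [← mul_assoc]
  refine mul_le_mul_of_nonneg_right ?_ (integral_neumannMode_mul_self_pos s).le
  calc (d s * -(π ^ 2 * ((s.1 : ℝ) ^ 2 + (s.2 : ℝ) ^ 2))) ^ 2
      = π ^ 4 * d s ^ 2 * ((s.1 : ℝ) ^ 2 + (s.2 : ℝ) ^ 2) ^ 2 := by ring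
    _ ≤ π ^ 4 * d s ^ 2 * (r ^ 2) ^ 2 := mul_le_mul_of_nonneg_left hfreq (by positivity)
    _ = (π * r) ^ 4 * d s ^ 2 := by ring

/-- The profile `sin (πx) sin ((m + 1)πx)`, which vanishes to second order at `0` and `1`,
written in terms of Neumann modes. -/
def trialProfile (m : ℕ) (x : ℝ) : ℝ := (cosMode m x - cosMode (m + 2) x) / 2

lemma contDiff_trialProfile (m : ℕ) {n : WithTop ℕ∞} : ContDiff ℝ n (trialProfile m) :=
  ((contDiff_cosMode m).sub (contDiff_cosMode (m + 2))).div_const 2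

lemma trialProfile_zero (m : ℕ) : trialProfile m 0 = 0 := by
  simp [trialProfile, cosMode]

lemma trialProfile_one (m : ℕ) : trialProfile m 1 = 0 := by
  simp only [trialProfile, cosMode, mul_one, Real.cos_nat_mul_pi, pow_add]
  norm_num

lemma deriv_trialProfile (m : ℕ) (x : ℝ) : deriv (trialProfile m) x =
    (-(m * π * Real.sin (m * π * x)) +
      ((m + 2 : ℕ) : ℝ) * π * Real.sin ((m + 2 : ℕ) * π * x)) / 2 := by
  have hd : ∀ n, DifferentiableAt ℝ (cosMode n) x := fun n =>
    (contDiff_cosMode n (m := 1)).differentiable one_ne_zero x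
  unfold trialProfile
  rw [deriv_div_const, deriv_fun_sub (hd m) (hd (m + 2)), deriv_cosMode, deriv_cosMode,
    sub_neg_eq_add]

lemma deriv_trialProfile_zero (m : ℕ) : deriv (trialProfile m) 0 = 0 := by
  simp [deriv_trialProfile]

lemma deriv_trialProfile_one (m : ℕ) : deriv (trialProfile m) 1 = 0 := by
  rw [deriv_trialProfile]
  simp only [mul_one, Real.sin_nat_mul_pi]
  norm_num

/-- The trial functions on the unit square. They vanish to second order on its boundary. -/
def trialFun (t : ℕ × ℕ) (p : ℝ × ℝ) : ℝ := trialProfile t.1 p.1 * trialProfile t.2 p.2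

lemma contDiff_trialFun (t : ℕ × ℕ) {n : WithTop ℕ∞} : ContDiff ℝ n (trialFun t) :=
  ((contDiff_trialProfile t.1).comp contDiff_fst).mul
    ((contDiff_trialProfile t.2).comp contDiff_snd)

/-- The coefficients of `trialFun t` in the basis of Neumann modes. -/
def trialCoeff (t : ℕ × ℕ) : ℕ × ℕ →₀ ℝ :=
  .single t (1 / 4) - .single (t + (2, 0)) (1 / 4) - .single (t + (0, 2)) (1 / 4) +
    .single (t + (2, 2)) (1 / 4)

lemma trialFun_eq_linearCombination (t : ℕ × ℕ) :
    trialFun t = Finsupp.linearCombination ℝ neumannMode (trialCoeff t) := by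
  funext p
  simp only [trialFun, trialProfile, trialCoeff, neumannMode, map_add, map_sub,
    Finsupp.linearCombination_single, Pi.add_apply, Pi.sub_apply, Pi.smul_apply, smul_eq_mul,
    Prod.fst_add, Prod.snd_add, add_zero]
  ring

lemma trialCoeff_self (t : ℕ × ℕ) : trialCoeff t t = 1 / 4 := by
  simp [trialCoeff, Prod.ext_iff]

lemma mem_Icc_of_trialCoeff_ne_zero {s t : ℕ × ℕ} (h : trialCoeff t s ≠ 0) :
    s ∈ Set.Icc t (t + (2, 2)) := by
  contrapose! h
  have hcorner : ∀ v ≤ ((2, 2) : ℕ × ℕ), t + v ≠ s := fun v hv hs =>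
    h (hs ▸ ⟨le_add_of_nonneg_right zero_le, by gcongr⟩)
  have hself : t ≠ s := by simpa using hcorner 0 (by decide)
  simp [trialCoeff, hself, hcorner (2, 0) (by decide), hcorner (0, 2) (by decide),
    hcorner (2, 2) (by decide)]

/- The coefficient at a minimal index of the combination receives no other contribution. -/
lemma linearIndependent_trialCoeff : LinearIndependent ℝ trialCoeff := by
  refine linearIndependent_iff.2 fun c hc => ?_
  by_contra hne
  obtain ⟨t, ht⟩ := c.support.exists_minimal (Finsupp.support_nonempty_iff.2 hne)
  have heval : c.sum (fun i a => a * trialCoeff i t) = 0 := by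
    simpa [Finsupp.linearCombination_apply, Finsupp.sum_apply'] using DFunLike.congr_fun hc t
  rw [Finsupp.sum, Finset.sum_eq_single_of_mem t ht.prop fun i hi hit => ?_,
    trialCoeff_self] at heval
  · exact Finsupp.mem_support_iff.1 ht.prop (by linarith)
  · by_contra hmul
    exact hit (ht.eq_of_le hi (mem_Icc_of_trialCoeff_ne_zero (right_ne_zero_of_mul hmul)).1)

section TrialSpace

variable {ι : Type*} [Fintype ι] (t : ι → ℕ × ℕ) (c : ι → ℝ)

lemma sum_mul_trialFun (p : ℝ × ℝ) :
    ∑ i, c i * trialFun (t i) p = ∑ s ∈ (∑ i, c i • trialCoeff (t i)).support,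
      (∑ i, c i • trialCoeff (t i)) s * neumannMode s p := by
  have hlin := congrFun (map_sum (Finsupp.linearCombination ℝ neumannMode)
    (fun i => c i • trialCoeff (t i)) Finset.univ) p
  simp only [map_smul, ← trialFun_eq_linearCombination, Finset.sum_apply, Pi.smul_apply,
    smul_eq_mul] at hlin
  rw [← hlin, Finsupp.linearCombination_apply, Finsupp.sum, Finset.sum_apply]
  simp only [Pi.smul_apply, smul_eq_mul]

lemma integral_sq_sum_trialFun_pos (ht : Function.Injective t) (hc : c ≠ 0) :
    0 < ∫ p in Rect 1, (∑ i, c i * trialFun (t i) p) ^ 2 := by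
  simp only [sum_mul_trialFun]
  refine integral_sq_sum_neumannMode_pos fun hzero => hc (funext ?_)
  exact Fintype.linearIndependent_iff.1 (linearIndependent_trialCoeff.comp t ht) c hzero

lemma integral_sq_sum_lap_trialFun_le {r : ℝ}
    (hr : ∀ i, (((t i).1 : ℝ) + 2) ^ 2 + (((t i).2 : ℝ) + 2) ^ 2 ≤ r ^ 2) :
    ∫ p in Rect 1, (∑ i, c i * lap (trialFun (t i)) p) ^ 2 ≤
      (π * r) ^ 4 * ∫ p in Rect 1, (∑ i, c i * trialFun (t i) p) ^ 2 := by
  have hlap := lap_sum (fun i => contDiff_trialFun (t i)) c Finset.univ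
  simp only [sum_mul_trialFun] at hlap
  simp only [← congrFun hlap, sum_mul_trialFun]
  refine integral_lap_sq_sum_neumannMode_le fun s hs => ?_
  rw [Finsupp.mem_support_iff, Finsupp.finsetSum_apply] at hs
  obtain ⟨i, -, hi⟩ := Finset.exists_ne_zero_of_sum_ne_zero hs
  obtain ⟨-, h₁, h₂⟩ := mem_Icc_of_trialCoeff_ne_zero (right_ne_zero_of_mul hi)
  refine le_trans ?_ (hr i)
  gcongr
  · exact_mod_cast h₁
  · exact_mod_cast h₂

end TrialSpace

/-! ### Truncation near the boundary -/

/-- A smooth function equal to `0` on `(-∞, 1]` and to `1` on `[2, ∞)`. -/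
def cutoff (y : ℝ) : ℝ := Real.smoothTransition (y - 1)

lemma contDiff_cutoff {n : ℕ∞} : ContDiff ℝ n cutoff :=
  Real.smoothTransition.contDiff.comp (contDiff_id.sub contDiff_const)

lemma cutoff_of_le_one {y : ℝ} (hy : y ≤ 1) : cutoff y = 0 :=
  Real.smoothTransition.zero_of_nonpos (by linarith)

lemma cutoff_of_two_le {y : ℝ} (hy : 2 ≤ y) : cutoff y = 1 :=
  Real.smoothTransition.one_of_one_le (by linarith)

lemma abs_cutoff_le_one (y : ℝ) : |cutoff y| ≤ 1 :=
  (abs_of_nonneg (Real.smoothTransition.nonneg _)).trans_le (Real.smoothTransition.le_one _)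

lemma hasCompactSupport_deriv_cutoff : HasCompactSupport (deriv cutoff) := by
  refine HasCompactSupport.intro (isCompact_Icc (a := 1) (b := 2)) fun y hy => ?_
  rcases not_and_or.1 hy with h | h
  · have hloc : cutoff =ᶠ[nhds y] fun _ => 0 := by
      filter_upwards [Iio_mem_nhds (not_le.1 h)] with z hz using cutoff_of_le_one (le_of_lt hz)
    rw [hloc.deriv_eq, deriv_const]
  · have hloc : cutoff =ᶠ[nhds y] fun _ => 1 := by
      filter_upwards [Ioi_mem_nhds (not_le.1 h)] with z hz using cutoff_of_two_le (le_of_lt hz)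
    rw [hloc.deriv_eq, deriv_const]

lemma exists_bound_deriv_cutoff : ∃ M, ∀ y, |y * deriv cutoff y| ≤ M ∧
    |y ^ 2 * deriv (deriv cutoff) y| ≤ M := by
  have hcont : Continuous (deriv cutoff) :=
    (contDiff_cutoff (n := 1)).continuous_deriv le_rfl
  have hcont' : Continuous (deriv (deriv cutoff)) :=
    ((contDiff_cutoff (n := 2)).iterate_deriv' 0 2).continuous
  obtain ⟨M₁, hM₁⟩ := (hasCompactSupport_deriv_cutoff.mul_left (f := fun y => y))
    |>.exists_bound_of_continuous (continuous_id.mul hcont)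
  obtain ⟨M₂, hM₂⟩ := (hasCompactSupport_deriv_cutoff.deriv.mul_left (f := fun y => y ^ 2))
    |>.exists_bound_of_continuous ((continuous_pow 2).mul hcont')
  exact ⟨max M₁ M₂, fun y => ⟨le_max_of_le_left (hM₁ y), le_max_of_le_right (hM₂ y)⟩⟩

lemma abs_le_mul_pow_succ_of_abs_deriv_le {h : ℝ → ℝ} {C : ℝ} {k : ℕ} (hC : 0 ≤ C)
    (hd : Differentiable ℝ h) (h₀ : h 0 = 0) (h₁ : h 1 = 0)
    (hderiv : ∀ x ∈ Set.Icc (0 : ℝ) 1, |deriv h x| ≤ C * (x * (1 - x)) ^ k) {x : ℝ}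
    (hx : x ∈ Set.Icc (0 : ℝ) 1) : |h x| ≤ 2 ^ (k + 1) * C * (x * (1 - x)) ^ (k + 1) := by
  have hend : ∀ e ∈ Set.Icc (0 : ℝ) 1, h e = 0 →
      (∀ y ∈ Set.Icc (0 : ℝ) 1, y * (1 - y) ≤ |y - e|) → |h x| ≤ C * |x - e| ^ (k + 1) := by
    intro e he he₀ hdist
    have hbound : ∀ y ∈ Set.uIcc e x, ‖deriv h y‖ ≤ C * |x - e| ^ k := fun y hy => by
      have hy₁ := Set.uIcc_subset_Icc he hx hy
      refine (hderiv y hy₁).trans (mul_le_mul_of_nonneg_left (pow_le_pow_left₀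
        (mul_nonneg hy₁.1 (sub_nonneg.2 hy₁.2)) ?_ k) hC)
      exact (hdist y hy₁).trans (Set.abs_sub_left_of_mem_uIcc hy)
    have hmvt := (convex_uIcc e x).norm_image_sub_le_of_norm_deriv_le (fun y _ => hd y) hbound
      Set.left_mem_uIcc Set.right_mem_uIcc
    rwa [he₀, sub_zero, Real.norm_eq_abs, Real.norm_eq_abs, mul_assoc, ← pow_succ] at hmvt
  have hclose : ∀ e : ℝ, |x - e| ≤ 2 * (x * (1 - x)) → C * |x - e| ^ (k + 1) ≤
      2 ^ (k + 1) * C * (x * (1 - x)) ^ (k + 1) := fun e he =>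
    calc C * |x - e| ^ (k + 1) ≤ C * (2 * (x * (1 - x))) ^ (k + 1) := by gcongr
      _ = 2 ^ (k + 1) * C * (x * (1 - x)) ^ (k + 1) := by rw [mul_pow]; ring
  rcases le_total x (1 / 2) with hhalf | hhalf
  · refine (hend 0 (by simp) h₀ fun y hy => ?_).trans (hclose 0 ?_)
    · rw [sub_zero, abs_of_nonneg hy.1]
      nlinarith [hy.1]
    · rw [sub_zero, abs_of_nonneg hx.1]
      nlinarith [hx.1]
  · refine (hend 1 (by simp) h₁ fun y hy => ?_).trans (hclose 1 ?_)
    · rw [abs_of_nonpos (sub_nonpos.2 hy.2)]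
      nlinarith [hy.2]
    · rw [abs_of_nonpos (sub_nonpos.2 hx.2)]
      nlinarith [hx.2]

/-- The truncation of `f : ℝ → ℝ` to the points of `(0, 1)` at distance of order at least `1 / n`
from the endpoints. -/
def truncation (f : ℝ → ℝ) (n : ℕ) (x : ℝ) : ℝ := cutoff (n * (x * (1 - x))) * f x

section Truncation

variable {f : ℝ → ℝ}

lemma contDiff_truncation {m : ℕ∞} (hf : ContDiff ℝ m f) (n : ℕ) :
    ContDiff ℝ m (truncation f n) :=
  (contDiff_cutoff.comp (by fun_prop : ContDiff ℝ m fun x : ℝ => (n : ℝ) * (x * (1 - x)))).mul hf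

lemma tsupport_truncation_subset (f : ℝ → ℝ) (n : ℕ) :
    tsupport (truncation f n) ⊆ Set.Ioo 0 1 := by
  have hclosed : IsClosed {x : ℝ | 1 ≤ n * (x * (1 - x))} :=
    isClosed_le continuous_const (by fun_prop)
  have hsub : Function.support (truncation f n) ⊆ {x : ℝ | 1 ≤ n * (x * (1 - x))} :=
    fun x hx => le_of_not_gt fun h => hx (by rw [truncation, cutoff_of_le_one h.le, zero_mul])
  intro x hx
  have hpos : 0 < x * (1 - x) :=
    pos_of_mul_pos_right (one_pos.trans_le (closure_minimal hsub hclosed hx)) n.cast_nonneg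
  constructor <;> nlinarith

lemma hasCompactSupport_truncation (f : ℝ → ℝ) (n : ℕ) : HasCompactSupport (truncation f n) :=
  isCompact_Icc.of_isClosed_subset (isClosed_tsupport _)
    ((tsupport_truncation_subset f n).trans Set.Ioo_subset_Icc_self)

lemma eventually_truncation_eventuallyEq (f : ℝ → ℝ) {x : ℝ} (hx : x ∈ Set.Ioo (0 : ℝ) 1) :
    ∀ᶠ n : ℕ in atTop, truncation f n =ᶠ[nhds x] f := by
  have hlim := tendsto_natCast_atTop_atTop.atTop_mul_const (mul_pos hx.1 (sub_pos.2 hx.2))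
  filter_upwards [hlim.eventually_gt_atTop 2] with n hn
  have hcont : Continuous fun y : ℝ => (n : ℝ) * (y * (1 - y)) := by fun_prop
  filter_upwards [hcont.continuousAt.eventually_const_lt hn] with y hy
  rw [truncation, cutoff_of_two_le (le_of_lt hy), one_mul]

lemma deriv_deriv_truncation (hf : ContDiff ℝ 2 f) (n : ℕ) (x : ℝ) :
    deriv (deriv (truncation f n)) x =
      ((n * (1 - 2 * x)) ^ 2 * deriv (deriv cutoff) (n * (x * (1 - x))) -
        2 * n * deriv cutoff (n * (x * (1 - x)))) * f x +
      2 * (n * (1 - 2 * x) * deriv cutoff (n * (x * (1 - x))) * deriv f x) +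
      cutoff (n * (x * (1 - x))) * deriv (deriv f) x := by
  have harg : ∀ x : ℝ, HasDerivAt (fun x : ℝ => (n : ℝ) * (x * (1 - x))) (n * (1 - 2 * x)) x :=
    fun x => (((hasDerivAt_id' x).mul ((hasDerivAt_id' x).const_sub 1)).const_mul
      (n : ℝ)).congr_deriv (by ring)
  have hslope : ∀ x : ℝ, HasDerivAt (fun x : ℝ => (n : ℝ) * (1 - 2 * x)) (-(2 * n)) x :=
    fun x => ((((hasDerivAt_id' x).const_mul 2).const_sub 1).const_mul (n : ℝ)).congr_deriv
      (by ring)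
  have hq : ∀ y, HasDerivAt cutoff (deriv cutoff y) y := fun y =>
    ((contDiff_cutoff (n := 1)).differentiable one_ne_zero y).hasDerivAt
  have hq' : ∀ y, HasDerivAt (deriv cutoff) (deriv (deriv cutoff) y) y := fun y =>
    ((contDiff_cutoff (n := 2)).differentiable_deriv_two y).hasDerivAt
  have hf₁ : ∀ x, HasDerivAt f (deriv f x) x := fun x =>
    (hf.differentiable two_ne_zero x).hasDerivAt
  have hf₂ : ∀ x, HasDerivAt (deriv f) (deriv (deriv f) x) x := fun x =>
    (hf.differentiable_deriv_two x).hasDerivAt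
  have hfirst : deriv (truncation f n) = fun x =>
      deriv cutoff (n * (x * (1 - x))) * (n * (1 - 2 * x)) * f x +
        cutoff (n * (x * (1 - x))) * deriv f x :=
    funext fun x => (((hq _).comp x (harg x)).mul (hf₁ x)).deriv
  rw [hfirst]
  refine HasDerivAt.deriv ((((((hq' _).comp x (harg x)).mul (hslope x)).mul (hf₁ x)).add
    (((hq _).comp x (harg x)).mul (hf₂ x))).congr_deriv ?_)
  simp only [Function.comp_apply, Pi.mul_apply]
  ring

lemma exists_bound_of_eq_zero_of_deriv_eq_zero (hf : ContDiff ℝ 2 f) (h₀ : f 0 = 0)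
    (h₁ : f 1 = 0) (h₀' : deriv f 0 = 0) (h₁' : deriv f 1 = 0) :
    ∃ K, 0 ≤ K ∧ ∀ x ∈ Set.Icc (0 : ℝ) 1, |f x| ≤ 8 * K * (x * (1 - x)) ^ 2 ∧
      |deriv f x| ≤ 2 * K * (x * (1 - x)) ∧ |deriv (deriv f) x| ≤ K := by
  have hcont : Continuous (deriv (deriv f)) := (hf.iterate_deriv' 0 2).continuous
  obtain ⟨K, hK⟩ := isCompact_Icc.exists_bound_of_continuousOn
    (hcont.continuousOn (s := Set.Icc (0 : ℝ) 1))
  have hK₀ : 0 ≤ K := (norm_nonneg _).trans (hK 0 (by simp))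
  have hf' : ∀ x ∈ Set.Icc (0 : ℝ) 1, |deriv f x| ≤ 2 * K * (x * (1 - x)) := fun x hx => by
    simpa only [zero_add, pow_one] using abs_le_mul_pow_succ_of_abs_deriv_le (k := 0) hK₀
      hf.differentiable_deriv_two h₀' h₁' (fun y hy => by simpa using hK y hy) hx
  have hf₀ : ∀ x ∈ Set.Icc (0 : ℝ) 1, |f x| ≤ 8 * K * (x * (1 - x)) ^ 2 := fun x hx =>
    (abs_le_mul_pow_succ_of_abs_deriv_le (C := 2 * K) (k := 1) (by positivity)
      (hf.differentiable two_ne_zero) h₀ h₁ (fun y hy => by simpa only [pow_one] using hf' y hy)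
      hx).trans_eq (by ring)
  exact ⟨K, hK₀, fun x hx => ⟨hf₀ x hx, hf' x hx, hK x hx⟩⟩

lemma abs_deriv_deriv_truncation_le (hf : ContDiff ℝ 2 f) {K M : ℝ} (hK : 0 ≤ K) {n : ℕ} {x : ℝ}
    (hx : x ∈ Set.Icc (0 : ℝ) 1) (hf₀ : |f x| ≤ 8 * K * (x * (1 - x)) ^ 2)
    (hf₁ : |deriv f x| ≤ 2 * K * (x * (1 - x))) (hf₂ : |deriv (deriv f) x| ≤ K)
    (hM₁ : |n * (x * (1 - x)) * deriv cutoff (n * (x * (1 - x)))| ≤ M)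
    (hM₂ : |(n * (x * (1 - x))) ^ 2 * deriv (deriv cutoff) (n * (x * (1 - x)))| ≤ M) :
    |deriv (deriv (truncation f n)) x| ≤ 28 * (K * M) + K := by
  rw [deriv_deriv_truncation hf]
  set g := x * (1 - x)
  set q₀ := cutoff (n * g)
  set q₁ := deriv cutoff (n * g)
  set q₂ := deriv (deriv cutoff) (n * g)
  have hg₀ : 0 ≤ g := mul_nonneg hx.1 (sub_nonneg.2 hx.2)
  have hg₁ : g ≤ 1 := by nlinarith [sq_nonneg x, hx.2]
  have hslope : |1 - 2 * x| ≤ 1 := abs_le.2 ⟨by linarith [hx.2], by linarith [hx.1]⟩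
  rw [abs_mul, abs_of_nonneg (by positivity)] at hM₁ hM₂
  have hq₂f : |(n * (1 - 2 * x)) ^ 2 * q₂ * f x| ≤ 8 * (K * M) := by
    calc |(n * (1 - 2 * x)) ^ 2 * q₂ * f x|
        = n ^ 2 * |1 - 2 * x| ^ 2 * |q₂| * |f x| := by
          simp only [abs_mul, abs_pow, Nat.abs_cast]; ring
      _ ≤ n ^ 2 * 1 ^ 2 * |q₂| * (8 * K * g ^ 2) := by gcongr
      _ = 8 * (K * ((n * g) ^ 2 * |q₂|)) := by ring
      _ ≤ 8 * (K * M) := by gcongr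
  have hq₁f : |2 * n * q₁ * f x| ≤ 16 * (K * M) := by
    calc |2 * n * q₁ * f x| = 2 * n * |q₁| * |f x| := by
          simp only [abs_mul, abs_two, Nat.abs_cast]
      _ ≤ 2 * n * |q₁| * (8 * K * g ^ 2) := by gcongr
      _ = 16 * (K * (n * g * |q₁|)) * g := by ring
      _ ≤ 16 * (K * (n * g * |q₁|)) * 1 := by gcongr
      _ ≤ 16 * (K * M) := by rw [mul_one]; gcongr
  have hq₁f' : |n * (1 - 2 * x) * q₁ * deriv f x| ≤ 2 * (K * M) := by
    calc |n * (1 - 2 * x) * q₁ * deriv f x| = n * |1 - 2 * x| * |q₁| * |deriv f x| := by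
          simp only [abs_mul, Nat.abs_cast]
      _ ≤ n * 1 * |q₁| * (2 * K * g) := by gcongr
      _ = 2 * (K * (n * g * |q₁|)) := by ring
      _ ≤ 2 * (K * M) := by gcongr
  have hqf'' : |q₀ * deriv (deriv f) x| ≤ 1 * K := by
    rw [abs_mul]
    gcongr
    exact abs_cutoff_le_one _
  rw [abs_le] at hq₂f hq₁f hq₁f' hqf'' ⊢
  constructor <;> linarith

/- Each derivative of the cutoff costs a factor `1 / (x (1 - x))`, and the double zeros of `f` make
up for two of them. -/
lemma exists_bound_truncation (hf : ContDiff ℝ 2 f) (h₀ : f 0 = 0) (h₁ : f 1 = 0)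
    (h₀' : deriv f 0 = 0) (h₁' : deriv f 1 = 0) : ∃ C, ∀ n, ∀ x ∈ Set.Ioo (0 : ℝ) 1,
      |truncation f n x| ≤ C ∧ |deriv (deriv (truncation f n)) x| ≤ C := by
  obtain ⟨M, hM⟩ := exists_bound_deriv_cutoff
  obtain ⟨K, hK, hbound⟩ := exists_bound_of_eq_zero_of_deriv_eq_zero hf h₀ h₁ h₀' h₁'
  refine ⟨max (8 * K) (28 * (K * M) + K), fun n x hx => ?_⟩
  have hxI := Set.Ioo_subset_Icc_self hx
  obtain ⟨hf₀, hf₁, hf₂⟩ := hbound x hxI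
  obtain ⟨hM₁, hM₂⟩ := hM (n * (x * (1 - x)))
  refine ⟨le_max_of_le_left ?_, le_max_of_le_right
    (abs_deriv_deriv_truncation_le hf hK hxI hf₀ hf₁ hf₂ hM₁ hM₂)⟩
  have hg : (x * (1 - x)) ^ 2 ≤ 1 :=
    pow_le_one₀ (mul_nonneg hxI.1 (sub_nonneg.2 hxI.2)) (by nlinarith [sq_nonneg x, hx.2])
  calc |truncation f n x| = |cutoff (n * (x * (1 - x)))| * |f x| := abs_mul _ _
    _ ≤ 1 * (8 * K * 1) :=
      mul_le_mul (abs_cutoff_le_one _) (hf₀.trans (by gcongr)) (abs_nonneg _) zero_le_one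
    _ = 8 * K := by ring

end Truncation

/-- The truncations of `trialFun t` to admissible functions on the unit square. -/
def truncatedTrialFun (n : ℕ) (t : ℕ × ℕ) (p : ℝ × ℝ) : ℝ :=
  truncation (trialProfile t.1) n p.1 * truncation (trialProfile t.2) n p.2

lemma lap_truncatedTrialFun (n : ℕ) (t : ℕ × ℕ) : lap (truncatedTrialFun n t) = fun p =>
    deriv (deriv (truncation (trialProfile t.1) n)) p.1 * truncation (trialProfile t.2) n p.2 +
      truncation (trialProfile t.1) n p.1 * deriv (deriv (truncation (trialProfile t.2) n)) p.2 :=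
  lap_tensor (contDiff_truncation (m := 2) (contDiff_trialProfile _) n)
    (contDiff_truncation (m := 2) (contDiff_trialProfile _) n)

lemma adm_truncatedTrialFun (n : ℕ) (t : ℕ × ℕ) : Adm (Rect 1) (truncatedTrialFun n t) := by
  have hsupp : Function.support (truncatedTrialFun n t) ⊆
      tsupport (truncation (trialProfile t.1) n) ×ˢ tsupport (truncation (trialProfile t.2) n) :=
    fun p hp => ⟨subset_tsupport _ (left_ne_zero_of_mul hp),
      subset_tsupport _ (right_ne_zero_of_mul hp)⟩
  have htsupp := closure_minimal hsupp ((isClosed_tsupport _).prod (isClosed_tsupport _))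
  refine ⟨((contDiff_truncation (contDiff_trialProfile _) n).comp contDiff_fst).mul
    ((contDiff_truncation (contDiff_trialProfile _) n).comp contDiff_snd), ?_, ?_⟩
  · exact ((hasCompactSupport_truncation _ n).isCompact.prod
      (hasCompactSupport_truncation _ n).isCompact).of_isClosed_subset (isClosed_tsupport _) htsupp
  · rw [Rect_one]
    exact htsupp.trans (Set.prod_mono (tsupport_truncation_subset _ n)
      (tsupport_truncation_subset _ n))

lemma eventually_truncatedTrialFun_eq (t : ℕ × ℕ) {p : ℝ × ℝ} (hp : p ∈ Rect 1) :
    ∀ᶠ n in atTop, truncatedTrialFun n t p = trialFun t p ∧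
      lap (truncatedTrialFun n t) p = lap (trialFun t) p := by
  rw [Rect_one] at hp
  filter_upwards [eventually_truncation_eventuallyEq (trialProfile t.1) hp.1,
    eventually_truncation_eventuallyEq (trialProfile t.2) hp.2] with n h₁ h₂
  have hlap : lap (trialFun t) = _ :=
    lap_tensor (contDiff_trialProfile t.1) (contDiff_trialProfile t.2)
  refine ⟨congrArg₂ (· * ·) h₁.eq_of_nhds h₂.eq_of_nhds, ?_⟩
  rw [lap_truncatedTrialFun, hlap]
  simp only [h₁.eq_of_nhds, h₂.eq_of_nhds, h₁.deriv.deriv_eq, h₂.deriv.deriv_eq]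

lemma exists_bound_truncatedTrialFun (t : ℕ × ℕ) : ∃ C, ∀ n, ∀ p ∈ Rect 1,
    |truncatedTrialFun n t p| ≤ C ∧ |lap (truncatedTrialFun n t) p| ≤ C := by
  have hprofile := fun m => exists_bound_truncation (contDiff_trialProfile m)
    (trialProfile_zero m) (trialProfile_one m) (deriv_trialProfile_zero m)
    (deriv_trialProfile_one m)
  choose C hC using hprofile
  refine ⟨2 * (C t.1 * C t.2), fun n p hp => ?_⟩
  rw [Rect_one] at hp
  obtain ⟨h₁, h₁'⟩ := hC t.1 n p.1 hp.1
  obtain ⟨h₂, h₂'⟩ := hC t.2 n p.2 hp.2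
  have hC₁ : 0 ≤ C t.1 := (abs_nonneg _).trans h₁
  have hmul : ∀ {x y : ℝ}, |x| ≤ C t.1 → |y| ≤ C t.2 → |x * y| ≤ C t.1 * C t.2 := fun hx hy => by
    rw [abs_mul]
    gcongr
  have hprod := hmul h₁ h₂
  refine ⟨hprod.trans (by linarith [(abs_nonneg _).trans hprod]), ?_⟩
  rw [lap_truncatedTrialFun, two_mul]
  exact (abs_add_le _ _).trans (add_le_add (hmul h₁' h₂) (hmul h₁ h₂'))

lemma tendsto_gramMatrix {ι : Type*} {Ω : Set (ℝ × ℝ)} (hΩ : MeasurableSet Ω)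
    (hvol : volume Ω ≠ ⊤) {w : ℕ → ι → ℝ × ℝ → ℝ} {f : ι → ℝ × ℝ → ℝ} {C : ι → ℝ}
    (hw : ∀ n i, Adm Ω (w n i)) (hC : ∀ i n, ∀ p ∈ Ω, |w n i p| ≤ C i)
    (hlim : ∀ i, ∀ p ∈ Ω, ∀ᶠ n in atTop, w n i p = f i p) :
    Tendsto (fun n => gramMatrix volume (w n)) atTop (nhds (gramMatrix (volume.restrict Ω) f)) := by
  refine tendsto_pi_nhds.2 fun i => tendsto_pi_nhds.2 fun j => ?_
  have hrestrict : ∀ n, gramMatrix volume (w n) i j = ∫ p in Ω, w n i p * w n j p := fun n =>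
    (setIntegral_eq_integral_of_forall_compl_eq_zero fun p hp => by
      rw [(hw n i).eq_zero hp, zero_mul]).symm
  simp only [hrestrict]
  refine tendsto_integral_of_dominated_convergence (fun _ => C i * C j) (fun n =>
      ((hw n i).continuous.mul (hw n j).continuous).aestronglyMeasurable)
    (integrableOn_const hvol) (fun n => ?_) ?_
  · refine (ae_restrict_iff' hΩ).2 (.of_forall fun p hp => ?_)
    rw [norm_mul]
    exact mul_le_mul (hC i n p hp) (hC j n p hp) (norm_nonneg _)
      ((abs_nonneg _).trans (hC i n p hp))
  · refine (ae_restrict_iff' hΩ).2 (.of_forall fun p hp => tendsto_nhds_of_eventually_eq ?_)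
    filter_upwards [hlim i p hp, hlim j p hp] with n hi hj using by rw [hi, hj]

lemma lamk_one_le_of_injective {k : ℕ} {r : ℝ} {t : Fin k → ℕ × ℕ} (ht : Function.Injective t)
    (hr : ∀ i, (((t i).1 : ℝ) + 2) ^ 2 + (((t i).2 : ℝ) + 2) ^ 2 ≤ r ^ 2) :
    lamk k 1 ≤ (π * r) ^ 4 := by
  choose C hC using exists_bound_truncatedTrialFun
  have hΩ : MeasurableSet (Rect 1) := measurableSet_Ioo.prod measurableSet_Ioo
  have hvol : volume (Rect 1) ≠ ⊤ :=
    ((Metric.isBounded_Ioo _ _).prod (Metric.isBounded_Ioo _ _)).measure_lt_top.ne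
  have hadm : ∀ n i, Adm (Rect 1) (truncatedTrialFun n (t i)) := fun n i =>
    adm_truncatedTrialFun n (t i)
  have hcont : ∀ i, Continuous (trialFun (t i)) := fun i =>
    (contDiff_trialFun (t i) (n := 0)).continuous
  have hcontLap : ∀ i, Continuous (lap (trialFun (t i))) := fun i =>
    continuous_lap (contDiff_trialFun (t i))
  refine lamk_le_of_tendsto_gramMatrix (by positivity) hadm
    (tendsto_gramMatrix hΩ hvol (fun n i => (hadm n i).lap) (fun i n p hp => (hC (t i) n p hp).2)
      fun i p hp => (eventually_truncatedTrialFun_eq (t i) hp).mono fun n h => h.2)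
    (tendsto_gramMatrix hΩ hvol hadm (fun i n p hp => (hC (t i) n p hp).1)
      fun i p hp => (eventually_truncatedTrialFun_eq (t i) hp).mono fun n h => h.1)
    (fun c hc => ?_) fun c => ?_
  · rw [dotProduct_gramMatrix_mulVec fun i j => integrableOn_Rect_one ((hcont i).mul (hcont j))]
    exact integral_sq_sum_trialFun_pos t c ht hc
  · rw [dotProduct_gramMatrix_mulVec fun i j => integrableOn_Rect_one ((hcont i).mul (hcont j)),
      dotProduct_gramMatrix_mulVec fun i j =>
        integrableOn_Rect_one ((hcontLap i).mul (hcontLap j))]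
    exact integral_sq_sum_lap_trialFun_le t c hr

lemma lamk_one_le {k : ℕ} {r : ℝ} (I : Finset (ℕ × ℕ)) (hk : k ≤ I.card)
    (hI : ∀ p ∈ I, ((p.1 : ℝ) + 2) ^ 2 + ((p.2 : ℝ) + 2) ^ 2 ≤ r ^ 2) :
    lamk k 1 ≤ (π * r) ^ 4 := by
  obtain ⟨J, hJI, hJ⟩ := Finset.exists_subset_card_eq hk
  exact lamk_one_le_of_injective
    (Subtype.val_injective.comp (J.equivFinOfCardEq hJ).symm.injective)
    fun i => hI _ (hJI (Subtype.coe_prop _))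

/-! ### Comparison with the square -/

/-- The positive root `r` of `π r² / 4 - ρ r = K`: a frequency radius at which a two-term Weyl law
with boundary coefficient `ρ` counts `K` eigenvalues. -/
def weylRadius (ρ K : ℝ) : ℝ := 2 * (ρ + √(ρ ^ 2 + π * K)) / π

lemma weylRadius_spec (ρ : ℝ) {K : ℝ} (hK : 0 ≤ K) :
    π * weylRadius ρ K ^ 2 / 4 - ρ * weylRadius ρ K = K := by
  have hsq : √(ρ ^ 2 + π * K) ^ 2 = ρ ^ 2 + π * K := Real.sq_sqrt (by positivity)
  rw [weylRadius]
  field_simp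
  linear_combination 4 * hsq

lemma weylRadius_lt_weylRadius {ρ₁ ρ₂ K : ℝ} (hK : 0 ≤ K) (hρ₁ : 0 ≤ ρ₁) (h : ρ₁ < ρ₂) :
    weylRadius ρ₁ K < weylRadius ρ₂ K := by
  unfold weylRadius
  gcongr

lemma tendsto_weylRadius_atTop (ρ : ℝ) :
    Tendsto (fun k : ℕ => weylRadius ρ k) atTop atTop := by
  have harg : Tendsto (fun k : ℕ => ρ ^ 2 + π * k) atTop atTop :=
    tendsto_atTop_add_const_left _ _ (tendsto_natCast_atTop_atTop.const_mul_atTop Real.pi_pos)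
  exact ((tendsto_atTop_add_const_left _ ρ (Real.tendsto_sqrt_atTop.comp harg)).const_mul_atTop
    two_pos).atTop_div_const Real.pi_pos

lemma eventually_lamk_one_le {ρ : ℝ} (hρ : 7 / 2 < ρ) :
    ∀ᶠ k : ℕ in atTop, lamk k 1 ≤ (π * weylRadius ρ k) ^ 4 := by
  have hlim := tendsto_weylRadius_atTop ρ
  filter_upwards [hlim.eventually_ge_atTop 1, (Real.tendsto_sqrt_atTop.comp hlim)
    |>.eventually_ge_atTop (3 / (ρ - 7 / 2))] with k hr hsqrt
  obtain ⟨I, hcard, hI⟩ := exists_trial_finset hr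
  refine lamk_one_le I ?_ hI
  rw [Function.comp_apply, div_le_iff₀ (by linarith)] at hsqrt
  have hgap : 3 * √(weylRadius ρ k) ≤ (ρ - 7 / 2) * weylRadius ρ k :=
    calc 3 * √(weylRadius ρ k)
        ≤ √(weylRadius ρ k) * (ρ - 7 / 2) * √(weylRadius ρ k) := by gcongr
      _ = (ρ - 7 / 2) * √(weylRadius ρ k) ^ 2 := by ring
      _ = (ρ - 7 / 2) * weylRadius ρ k := by rw [Real.sq_sqrt (by linarith)]
  have hle : (k : ℝ) ≤ I.card := by
    linarith [le_circleSum hr, weylRadius_spec ρ k.cast_nonneg]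
  exact_mod_cast hle

lemma sqrt_sq_sub_floor_sq_lt {x : ℝ} (hx : 1 ≤ x) : √(x ^ 2 - (⌊x⌋₊ : ℝ) ^ 2) < 7 / 8 * x := by
  have hfloor : x / 2 ≤ ⌊x⌋₊ := by
    have hone : (1 : ℝ) ≤ ⌊x⌋₊ := by exact_mod_cast Nat.floor_pos.2 hx
    linarith [Nat.lt_floor_add_one x]
  rw [Real.sqrt_lt' (by linarith)]
  nlinarith

lemma sq_sub_floor_sq_le {x : ℝ} (hx : 0 ≤ x) : x ^ 2 - (⌊x⌋₊ : ℝ) ^ 2 ≤ 2 * x := by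
  nlinarith [Nat.floor_le hx, Nat.lt_floor_add_one x]

/- On a bounded range of `a` the number `x` is large and its fractional part is negligible; for
large `a` the crude bound `x / 2 ≤ ⌊x⌋` suffices. -/
lemma mul_sqrt_sq_sub_floor_sq_lt {ρ θ a x : ℝ} (hρ : 0 < ρ) (hθ : 2 * ρ < θ) (ha : θ ≤ a)
    (hx : 1 ≤ x) (hax : 16 * ρ * (2 / (1 - 2 * ρ / θ) ^ 2) < a * x) :
    a * √(x ^ 2 - (⌊x⌋₊ : ℝ) ^ 2) < (a - 2 * ρ) * x := by
  have hθ₀ : 0 < θ := by linarith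
  have ha₀ : 0 < a := hθ₀.trans_le ha
  rcases le_total (16 * ρ) a with hlarge | hsmall
  · calc a * √(x ^ 2 - (⌊x⌋₊ : ℝ) ^ 2) < a * (7 / 8 * x) := by
          gcongr
          exact sqrt_sq_sub_floor_sq_lt hx
      _ = 7 / 8 * a * x := by ring
      _ ≤ (a - 2 * ρ) * x := by gcongr; linarith
  · have hε : 0 < 1 - 2 * ρ / θ := sub_pos.2 ((div_lt_one hθ₀).2 hθ)
    have hx' : 2 / (1 - 2 * ρ / θ) ^ 2 < x := by
      refine lt_of_mul_lt_mul_left (hax.trans_le ?_) (by positivity : 0 ≤ 16 * ρ)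
      gcongr
    rw [div_lt_iff₀ (by positivity)] at hx'
    calc a * √(x ^ 2 - (⌊x⌋₊ : ℝ) ^ 2) < a * ((1 - 2 * ρ / θ) * x) := by
          gcongr
          rw [Real.sqrt_lt' (by positivity)]
          nlinarith [sq_sub_floor_sq_le (zero_le_one.trans hx)]
      _ ≤ a * ((1 - 2 * ρ / a) * x) := by gcongr
      _ = (a - 2 * ρ) * x := by field_simp

lemma eventually_sq_mul_circleSum_lt {ρ θ : ℝ} (hρ : 0 < ρ) (hθ : 2 * ρ < θ) :
    ∀ᶠ R in atTop, ∀ a ≥ θ, a ^ 2 * circleSum (R / a) < π * R ^ 2 / 4 - ρ * R := by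
  filter_upwards [eventually_gt_atTop (4 * ρ / π),
    eventually_gt_atTop (16 * ρ * (2 / (1 - 2 * ρ / θ) ^ 2))] with R hRπ hR a ha
  have ha₀ : 0 < a := by linarith
  have hR₀ : 0 < R := (by positivity : (0 : ℝ) < 4 * ρ / π).trans hRπ
  obtain ⟨x, rfl⟩ : ∃ x, R = a * x := ⟨R / a, (mul_div_cancel₀ R ha₀.ne').symm⟩
  rw [mul_div_cancel_left₀ x ha₀.ne']
  rcases lt_or_ge x 1 with hx | hx
  · have hzero : circleSum x = 0 := by simp [circleSum, Nat.floor_eq_zero.2 hx]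
    rw [div_lt_iff₀ Real.pi_pos] at hRπ
    rw [hzero]
    nlinarith
  · have hgain := mul_sqrt_sq_sub_floor_sq_lt hρ hθ ha hx hR
    calc a ^ 2 * circleSum x
        ≤ a ^ 2 * (π * x ^ 2 / 4 - (x - √(x ^ 2 - (⌊x⌋₊ : ℝ) ^ 2)) / 2) := by
          gcongr
          exact circleSum_le (zero_le_one.trans hx)
      _ = π * (a * x) ^ 2 / 4 - a * (a * x - a * √(x ^ 2 - (⌊x⌋₊ : ℝ) ^ 2)) / 2 := by ring
      _ < π * (a * x) ^ 2 / 4 - a * (a * x - (a - 2 * ρ) * x) / 2 := by gcongr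
      _ = π * (a * x) ^ 2 / 4 - ρ * (a * x) := by ring

lemma eventually_le_lamk {ρ θ : ℝ} (hρ : 0 < ρ) (hθ : 2 * ρ < θ) :
    ∀ᶠ k : ℕ in atTop, ∀ a ≥ θ, (π * weylRadius ρ k) ^ 4 ≤ lamk k a := by
  have hlim := tendsto_weylRadius_atTop ρ
  filter_upwards [hlim.eventually_ge_atTop 0,
    hlim.eventually (eventually_sq_mul_circleSum_lt hρ hθ)] with k hR hcount a ha
  have ha₀ : 0 < a := by linarith
  obtain ⟨E, hcard, hE⟩ := exists_lowFrequency_finset ha₀ hR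
  refine le_lamk ha₀ E hE ?_
  have hlt : (E.card : ℝ) < k := by
    linarith [hcount a ha, weylRadius_spec ρ k.cast_nonneg]
  exact_mod_cast hlt

lemma eventually_lamk_one_lt {θ : ℝ} (hθ : 7 < θ) :
    ∀ᶠ k : ℕ in atTop, ∀ a ≥ θ, lamk k 1 < lamk k a := by
  obtain ⟨ρ₂, hρ₂, hρ₂θ⟩ := exists_between (show 7 / 2 < θ / 2 by linarith)
  obtain ⟨ρ₁, hρ₁, hρ₁₂⟩ := exists_between hρ₂
  filter_upwards [eventually_lamk_one_le hρ₁,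
    eventually_le_lamk (ρ := ρ₂) (by linarith) (by linarith : 2 * ρ₂ < θ),
    (tendsto_weylRadius_atTop ρ₁).eventually_ge_atTop 0] with k hsquare hlong hr a ha
  calc lamk k 1 ≤ (π * weylRadius ρ₁ k) ^ 4 := hsquare
    _ < (π * weylRadius ρ₂ k) ^ 4 := by
      gcongr
      exact weylRadius_lt_weylRadius k.cast_nonneg (by linarith) hρ₁₂
    _ ≤ lamk k a := hlong a ha

theorem minimiser_sequence_bounded_general (a : ℕ → ℝ)
    (ha : ∀ k : ℕ, 0 < a k ∧ lamk (k + 1) (a k) ≤ lamk (k + 1) 1) :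
    Filter.limsup a Filter.atTop ≤ 7 ∧ ∃ M : ℝ, ∀ k : ℕ, a k ≤ M := by
  have hevent : ∀ θ > 7, ∀ᶠ k in atTop, a k ≤ θ := fun θ hθ => by
    filter_upwards [(tendsto_add_atTop_nat 1).eventually (eventually_lamk_one_lt hθ)] with k hk
    exact le_of_not_ge fun hle => (hk (a k) hle).not_ge (ha k).2
  constructor
  · refine le_of_forall_gt_imp_ge_of_dense fun θ hθ => Filter.limsup_le_of_le ?_ (hevent θ hθ)
    exact (Filter.isBoundedUnder_of ⟨0, fun k => (ha k).1.le⟩).isCoboundedUnder_le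
  · obtain ⟨M, hM⟩ := Filter.IsBoundedUnder.bddAbove_range (f := a) ⟨8, hevent 8 (by norm_num)⟩
    exact ⟨M, fun k => hM ⟨k, rfl⟩⟩

/-! ### The numerical constant -/

lemma sq_Gamma_midpoint_le {s t : ℝ} (hs : 0 < s) (ht : 0 < t) :
    Real.Gamma ((s + t) / 2) ^ 2 ≤ Real.Gamma s * Real.Gamma t := by
  have hmid := Real.Gamma_mul_add_mul_le_rpow_Gamma_mul_rpow_Gamma hs ht
    (a := 1 / 2) (b := 1 / 2) one_half_pos one_half_pos (add_halves 1)
  rw [← Real.sqrt_eq_rpow, ← Real.sqrt_eq_rpow, ← Real.sqrt_mul (Real.Gamma_pos_of_pos hs).le,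
    ← mul_add, one_div_mul_eq_div] at hmid
  exact (Real.le_sqrt' (Real.Gamma_pos_of_pos (by positivity))).1 hmid

lemma two_div_pi_le_Gamma_div :
    2 / π ≤ Real.Gamma (3 / 4) / (√π * Real.Gamma (5 / 4)) := by
  have hprod := sq_Gamma_midpoint_le (s := 3 / 4) (t := 5 / 4) (by norm_num) (by norm_num)
  have hsq := sq_Gamma_midpoint_le (s := 1) (t := 1 / 2 + 1) (by norm_num) (by norm_num)
  rw [Real.Gamma_one, Real.Gamma_add_one (by norm_num), Real.Gamma_one_half_eq] at hsq
  norm_num at hprod hsq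
  have hΓ : 0 < Real.Gamma (5 / 4) := Real.Gamma_pos_of_pos (by norm_num)
  rw [div_le_div_iff₀ Real.pi_pos (by positivity)]
  refine le_of_mul_le_mul_right ?_ hΓ
  calc 2 * (√π * Real.Gamma (5 / 4)) * Real.Gamma (5 / 4)
      = 2 * √π * Real.Gamma (5 / 4) ^ 2 := by ring
    _ ≤ 2 * √π * (1 / 2 * √π) := by gcongr
    _ = 1 * √π ^ 2 := by ring
    _ ≤ Real.Gamma (3 / 4) * Real.Gamma (5 / 4) * π := by
      rw [Real.sq_sqrt Real.pi_pos.le]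
      gcongr
    _ = Real.Gamma (3 / 4) * π * Real.Gamma (5 / 4) := by ring

lemma seven_le_limsup_bound : 7 ≤ (6 * √3 / (3 * √3 - 2 * √2)) *
    (1 + Real.Gamma (3 / 4) / (√π * Real.Gamma (5 / 4))) := by
  have hsqrt : 57 * √3 ≤ 70 * √2 := by
    refine le_of_sq_le_sq ?_ (by positivity)
    rw [mul_pow, mul_pow, Real.sq_sqrt zero_le_three, Real.sq_sqrt zero_le_two]
    norm_num
  have hden : 0 < 3 * √3 - 2 * √2 := by
    have : √2 < √3 := Real.sqrt_lt_sqrt zero_le_two (by norm_num)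
    linarith [Real.sqrt_nonneg 2]
  have hfactor : 35 / 8 ≤ 6 * √3 / (3 * √3 - 2 * √2) := by
    rw [le_div_iff₀ hden]
    linarith
  have hpi : 3 / 5 ≤ 2 / π := by
    rw [le_div_iff₀ Real.pi_pos]
    linarith [Real.pi_lt_d2]
  calc (7 : ℝ) = 35 / 8 * (1 + 3 / 5) := by norm_num
    _ ≤ _ := by
      gcongr ?_ * (1 + ?_)
      exact hpi.trans two_div_pi_le_Gamma_div

/-- Any sequence of minimisers of `λ_k` over rectangles of unit area has
`limsup ≤ (6√3/(3√3 − 2√2))·(1 + Γ(3/4)/(√π·Γ(5/4)))`; in particular it is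
bounded. -/
theorem minimiser_sequence_bounded (a : ℕ → ℝ)
    (ha : ∀ k : ℕ, 1 ≤ a k ∧ ∀ b : ℝ, 1 ≤ b → lamk (k + 1) (a k) ≤ lamk (k + 1) b) :
    Filter.limsup a Filter.atTop ≤
      (6 * Real.sqrt 3 / (3 * Real.sqrt 3 - 2 * Real.sqrt 2)) *
        (1 + Real.Gamma (3 / 4) / (Real.sqrt π * Real.Gamma (5 / 4))) ∧
    ∃ M : ℝ, ∀ k : ℕ, a k ≤ M := by
  have hbound := minimiser_sequence_bounded_general a fun k =>
    ⟨one_pos.trans_le (ha k).1, (ha k).2 1 le_rfl⟩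
  exact ⟨hbound.1.trans seven_le_limsup_bound, hbound.2⟩
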